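/- Let n be a positive even integer and z ∈ I^FPF_n. Then every w ∈ B_fpf(z) satisfies ℓ(w) ≥ ℓ_fpf(z), and 𝔊^Sp_z = Σ_{w ∈ B_fpf(z)} β^{ℓ(w) − ℓ_fpf(z)} 𝔊_w in ℤ[β][x_1,…,x_n]. -/

import Mathlib

open MvPolynomial

noncomputable section

/-- The coefficient ring `ℤ[β]`. -/
abbrev Rb : Type := Polynomial ℤ

/-- The indeterminate `β`. -/
def bb : Rb := Polynomial.X

/-- The order-reversing permutation `n⋯321`, i.e. `i ↦ n+1-i` in 1-indexed notation. -/
def revPerm (n : ℕ) : Equiv.Perm (Fin n) :=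
  ⟨Fin.rev, Fin.rev, fun i => Fin.rev_rev i, fun i => Fin.rev_rev i⟩

/-- `z` is a fixed-point-free involution. -/
def IsFPF {n : ℕ} (z : Equiv.Perm (Fin n)) : Prop :=
  z * z = 1 ∧ ∀ i, z i ≠ i

/-- `x_i + x_j + β x_i x_j`. -/
def oplus {n : ℕ} (i j : Fin n) : MvPolynomial (Fin n) Rb :=
  X i + X j + C bb * (X i * X j)

/-- `IsDivDiffB i j f g` encodes `∂_i^{(β)} f = g` where `j = i+1`:
`∂_i^{(β)} f = ((1+βx_j) f - s_i((1+βx_j) f)) / (x_i - x_j)`, stated multiplicatively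
(the quotient is exact, and `g` is uniquely determined since the ring is a domain). -/
def IsDivDiffB {n : ℕ} (i j : Fin n) (f g : MvPolynomial (Fin n) Rb) : Prop :=
  (X i - X j) * g =
    (1 + C bb * X j) * f - rename ⇑(Equiv.swap i j) ((1 + C bb * X j) * f)

/-- `∏_{1 ≤ i < j ≤ n-i} (x_i + x_j + β x_i x_j)` (variables 0-indexed). -/
def spTop (n : ℕ) : MvPolynomial (Fin n) Rb :=
  ∏ p ∈ Finset.univ.filter
      (fun p : Fin n × Fin n => p.1 < p.2 ∧ (p.1 : ℕ) + (p.2 : ℕ) + 2 ≤ n),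
    oplus p.1 p.2

/-- `x_1^{n-1} x_2^{n-2} ⋯ x_{n-1}^1` (variables 0-indexed). -/
def grTop (n : ℕ) : MvPolynomial (Fin n) Rb :=
  ∏ a : Fin n, X a ^ (n - 1 - (a : ℕ))

/-- The defining property of the family of symplectic Grothendieck polynomials. -/
def IsSpFam (n : ℕ) (G : Equiv.Perm (Fin n) → MvPolynomial (Fin n) Rb) : Prop :=
  G (revPerm n) = spTop n ∧
    ∀ z : Equiv.Perm (Fin n), IsFPF z →
      ∀ i j : Fin n, (j : ℕ) = (i : ℕ) + 1 →
        z i ≠ j → z j ≠ i → z j < z i →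
          IsDivDiffB i j (G z) (G (Equiv.swap i j * z * Equiv.swap i j))

/-- The defining property of the family of Grothendieck polynomials. -/
def IsGrothFam (n : ℕ) (G : Equiv.Perm (Fin n) → MvPolynomial (Fin n) Rb) : Prop :=
  G (revPerm n) = grTop n ∧
    ∀ (w : Equiv.Perm (Fin n)) (i j : Fin n), (j : ℕ) = (i : ℕ) + 1 →
      w j < w i → IsDivDiffB i j (G w) (G (w * Equiv.swap i j))

/-- The length (number of inversions) of a permutation. -/
def invLen {n : ℕ} (w : Equiv.Perm (Fin n)) : ℕ :=
  (Finset.univ.filter (fun p : Fin n × Fin n => p.1 < p.2 ∧ w p.2 < w p.1)).card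

/-- The fixed-point-free involution length `ℓ_fpf(z) = #{(i,j) : z(i) > z(j) < i < j}`. -/
def fpfLen {n : ℕ} (z : Equiv.Perm (Fin n)) : ℕ :=
  (Finset.univ.filter
      (fun p : Fin n × Fin n => z p.2 < z p.1 ∧ z p.2 < p.1 ∧ p.1 < p.2)).card

/-- The underlying function of `Θ = (1,2)(3,4)⋯(n-1,n)`. -/
def thetaFun (n : ℕ) (hn : n % 2 = 0) (i : Fin n) : Fin n :=
  ⟨if (i : ℕ) % 2 = 0 then (i : ℕ) + 1 else (i : ℕ) - 1, by
    have hi := i.isLt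
    split_ifs with h <;> omega⟩

/-- The fixed-point-free involution `Θ = (1,2)(3,4)⋯(n-1,n)`. -/
def theta (n : ℕ) (hn : n % 2 = 0) : Equiv.Perm (Fin n) :=
  Function.Involutive.toPerm (thetaFun n hn) (by
    intro i
    have hi := i.isLt
    apply Fin.ext
    simp only [thetaFun]
    split_ifs <;> omega)

/-- One step of the partial Hecke action: `heckeStep a z = some (z · s_{a+1})` when defined,
with `a` a 0-indexed letter (so `a` corresponds to the simple transposition of `a+1, a+2`
in 1-indexed notation). -/
def heckeStep {n : ℕ} (a : ℕ) (z : Equiv.Perm (Fin n)) : Option (Equiv.Perm (Fin n)) :=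
  if h : a + 1 < n then
    let i : Fin n := ⟨a, Nat.lt_of_succ_lt h⟩
    let j : Fin n := ⟨a + 1, h⟩
    if z i < z j then some (Equiv.swap i j * z * Equiv.swap i j)
    else if z i = j ∧ z j = i then none
    else if z i ≠ j ∧ z j ≠ i ∧ z j < z i then some z
    else none
  else none

/-- Apply a word of (0-indexed) letters to `z` via the partial Hecke action. -/
def heckeApply {n : ℕ} (l : List ℕ) (z : Equiv.Perm (Fin n)) :
    Option (Equiv.Perm (Fin n)) :=
  l.foldl (fun o a => o.bind (heckeStep a)) (some z)

/-- The simple transposition corresponding to the 0-indexed letter `a`. -/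
def swapAt (n : ℕ) (a : ℕ) : Equiv.Perm (Fin n) :=
  if h : a + 1 < n then Equiv.swap ⟨a, Nat.lt_of_succ_lt h⟩ ⟨a + 1, h⟩ else 1

/-- The permutation `s_{i_1} s_{i_2} ⋯ s_{i_l}` of a word. -/
def wordToPerm (n : ℕ) (l : List ℕ) : Equiv.Perm (Fin n) := (l.map (swapAt n)).prod

/-- `l` is a reduced word for `w`. -/
def IsReducedWord (n : ℕ) (w : Equiv.Perm (Fin n)) (l : List ℕ) : Prop :=
  (∀ a ∈ l, a + 1 < n) ∧ wordToPerm n l = w ∧ l.length = invLen w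

/-- The set of Hecke atoms `B_fpf(z)`. -/
def Bfpf (n : ℕ) (hn : n % 2 = 0) (z : Equiv.Perm (Fin n)) :
    Finset (Equiv.Perm (Fin n)) :=
  @Finset.filter _
    (fun w => ∃ l : List ℕ, IsReducedWord n w l ∧ heckeApply l (theta n hn) = some z)
    (Classical.decPred _) Finset.univ

/-- `extPerm z w` is the permutation `z × w` acting on the first `m` letters by `z`
and the last `n` letters by `w`. -/
def extPerm {m n : ℕ} (z : Equiv.Perm (Fin m)) (w : Equiv.Perm (Fin n)) :
    Equiv.Perm (Fin (m + n)) :=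
  finSumFinEquiv.symm.trans ((Equiv.sumCongr z w).trans finSumFinEquiv)

/-- `rank(z_{[i][j]}) = #{k ∈ [j] : z(k) ≤ i}` (1-indexed sizes `i, j`). -/
def permRank {n : ℕ} (z : Equiv.Perm (Fin n)) (i j : ℕ) : ℕ :=
  (Finset.univ.filter (fun k : Fin n => (k : ℕ) < j ∧ ((z k : Fin n) : ℕ) < i)).card

/-- The rank of the upper-left `i × j` corner of `A` (1-indexed sizes `i, j ≤ n`). -/
def cornerRank {n : ℕ} (A : Matrix (Fin n) (Fin n) ℂ) (i j : ℕ) : ℕ :=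
  Matrix.rank (Matrix.of fun (a : Fin (min i n)) (b : Fin (min j n)) =>
    A ⟨(a : ℕ), lt_of_lt_of_le a.isLt (min_le_right i n)⟩
      ⟨(b : ℕ), lt_of_lt_of_le b.isLt (min_le_right j n)⟩)

/-- The orthogonal Rothe diagram `D^O(z) = {(i, z(j)) : z(i) > z(j) ≤ i < j}` (0-indexed). -/
def DO (n : ℕ) (z : Equiv.Perm (Fin n)) : Finset (Fin n × Fin n) :=
  Finset.image (fun p : Fin n × Fin n => (p.1, z p.2))
    (Finset.univ.filter (fun p : Fin n × Fin n => z p.2 < z p.1 ∧ z p.2 ≤ p.1 ∧ p.1 < p.2))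

/-- The symplectic Rothe diagram `D^Sp(z) = {(i, z(j)) : z(i) > z(j) < i < j}` (0-indexed). -/
def DSp (n : ℕ) (z : Equiv.Perm (Fin n)) : Finset (Fin n × Fin n) :=
  Finset.image (fun p : Fin n × Fin n => (p.1, z p.2))
    (Finset.univ.filter (fun p : Fin n × Fin n => z p.2 < z p.1 ∧ z p.2 < p.1 ∧ p.1 < p.2))

/-- The essential set `Ess(D) = {(i,j) ∈ D : (i,j+1) ∉ D and (i+1,j) ∉ D}`. -/
def Ess {n : ℕ} (D : Finset (Fin n × Fin n)) : Finset (Fin n × Fin n) :=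
  D.filter (fun p =>
    (∀ q ∈ D, ¬(q.1 = p.1 ∧ (q.2 : ℕ) = (p.2 : ℕ) + 1)) ∧
    (∀ q ∈ D, ¬((q.1 : ℕ) = (p.1 : ℕ) + 1 ∧ q.2 = p.2)))

/-- A permutation is vexillary if it avoids the pattern 2143. -/
def Vexillary {n : ℕ} (z : Equiv.Perm (Fin n)) : Prop :=
  ¬ ∃ i j k l : Fin n, i < j ∧ j < k ∧ k < l ∧ z j < z i ∧ z i < z l ∧ z l < z k

/-- The ideal of `ℤ[x_1,…,x_N]` generated by symmetric polynomials with zero constant term. -/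
def ILambda (N : ℕ) : Ideal (MvPolynomial (Fin N) ℤ) :=
  Ideal.span {f : MvPolynomial (Fin N) ℤ |
    (∀ σ : Equiv.Perm (Fin N), rename (⇑σ) f = f) ∧ coeff 0 f = 0}

/-- Substitute `x_j = 0` for all `j > n`, producing a polynomial in `x_1,…,x_n`. -/
def truncVars (n N : ℕ) (f : MvPolynomial (Fin N) Rb) : MvPolynomial (Fin n) Rb :=
  aeval (fun i : Fin N => if h : (i : ℕ) < n then X ⟨(i : ℕ), h⟩ else 0) f

/-- The order used to list the elements of a pipe-dream subset `S`:
rows weakly increasing, columns strictly decreasing within a row. -/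
def rowOrder {n : ℕ} (p q : Fin n × Fin n) : Prop :=
  p.1 < q.1 ∨ (p.1 = q.1 ∧ q.2 < p.2)

/-- `δ(S)` is a symplectic Hecke word for `z` (with Hecke words computed from `Θ`);
here `L` is the listing of `S` in the order `rowOrder`, and `(a,b) ∈ S` (0-indexed)
contributes the 0-indexed letter `a + b`, i.e. the 1-indexed letter `(b+1)+(a+1)-1`. -/
def DeltaHeckeWord (n : ℕ) (hn : n % 2 = 0) (z : Equiv.Perm (Fin n))
    (S : Finset (Fin n × Fin n)) : Prop :=
  ∃ L : List (Fin n × Fin n), L.toFinset = S ∧ L.Chain' rowOrder ∧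
    heckeApply (L.map (fun p => (p.1 : ℕ) + (p.2 : ℕ))) (theta n hn) = some z

/-!
For operators `u_a` satisfying the `0`-Hecke relations, the factors `h_a(x) = 1 + β x u_a` satisfy
the Yang–Baxter equation, so that the Fomin–Kirillov staircase product of them is almost symmetric
in neighbouring variables: when the `u_a` come from a partial `0`-Hecke action, the coefficients of
the product obey the divided difference recursion of Grothendieck polynomials. A family obeying
this recursion is determined by its top member, so each coefficient is a power of `β`, given by
the length, times the corresponding polynomial.

For the Demazure product on `S_n` this yields the `𝔊_w`. For the Hecke action on fixed-point-free
involutions, starting at `Θ`, the relations at `Θ` shorten the staircase to a word in the factors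
`x_i ⊕ x_j` that is too short to reach `n⋯321` in more than one way; so the top coefficient is
`∏ (x_i ⊕ x_j)`, up to a power of `β`, and the coefficients yield the `𝔊^Sp_z`.

By Matsumoto's theorem `w ↦ Θ · w` is well defined, and it intertwines the two actions. Hence the
coefficient at `z` is the sum of the coefficients at the `w` with `Θ · w = z`, which are the Hecke
atoms of `z`; cancelling `β^{ℓ_fpf(z)}` gives the expansion.
-/

section Rows
variable {A : Type*}

/-- The letters `c + m - 1, …, c + 1, c`, all with the same parameter. -/
def descRow (c m : ℕ) (y : A) : List (ℕ × A) := (List.range' c m).reverse.map (·, y)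

/-- The letters `c, c + 1, …, c + m - 1`, all with the same parameter. -/
def ascRow (c m : ℕ) (y : A) : List (ℕ × A) := (List.range' c m).map (·, y)

/-- The staircase with rows `descRow c m x_v, descRow (c + 1) (m - 1) x_{v + 1}, …`, whose product
is the Fomin–Kirillov generating function of (all) Grothendieck polynomials. -/
def staircase (x : ℕ → A) (c v : ℕ) : ℕ → List (ℕ × A)
  | 0 => []
  | m + 1 => descRow c (m + 1) (x v) ++ staircase x (c + 1) (v + 1) m

theorem descRow_succ (c m : ℕ) (y : A) : descRow c (m + 1) y = descRow (c + 1) m y ++ [(c, y)] := by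
  simp [descRow, List.range'_succ]

theorem descRow_succ' (c m : ℕ) (y : A) : descRow c (m + 1) y = (c + m, y) :: descRow c m y := by
  simp [descRow, List.range'_1_concat]

theorem ascRow_succ (c m : ℕ) (y : A) : ascRow c (m + 1) y = (c, y) :: ascRow (c + 1) m y := by
  simp [ascRow, List.range'_succ]

theorem ascRow_succ' (c m : ℕ) (y : A) : ascRow c (m + 1) y = ascRow c m y ++ [(c + m, y)] := by
  simp [ascRow, List.range'_1_concat]

theorem mem_descRow {c m : ℕ} {y : A} {p : ℕ × A} :
    p ∈ descRow c m y ↔ (c ≤ p.1 ∧ p.1 < c + m) ∧ p.2 = y := by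
  obtain ⟨a, x⟩ := p
  simp [descRow, eq_comm]

theorem mem_ascRow {c m : ℕ} {y : A} {p : ℕ × A} :
    p ∈ ascRow c m y ↔ (c ≤ p.1 ∧ p.1 < c + m) ∧ p.2 = y := by
  obtain ⟨a, x⟩ := p
  simp [ascRow, eq_comm]

theorem mem_staircase_imp {x : ℕ → A} {c v m : ℕ} {p : ℕ × A}
    (hp : p ∈ staircase x c v m) : (c ≤ p.1 ∧ p.1 < c + m) ∧ p.2 ∈ Set.range x := by
  induction m generalizing c v with
  | zero => simp [staircase] at hp
  | succ m ih =>
    rcases List.mem_append.1 hp with hp | hp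
    · exact (mem_descRow.1 hp).imp_right fun h ↦ ⟨v, h.symm⟩
    · obtain ⟨⟨hc, hm⟩, hx⟩ := ih hp
      exact ⟨⟨by omega, by omega⟩, hx⟩

theorem staircase_congr {x x' : ℕ → A} {v : ℕ} (h : ∀ k, v ≤ k → x k = x' k) (c m : ℕ) :
    staircase x c v m = staircase x' c v m := by
  induction m generalizing c v with
  | zero => rfl
  | succ m ih => rw [staircase, staircase, h v le_rfl, ih fun k hk ↦ h k (by omega)]

theorem staircase_map {B : Type*} (σ : A → B) (x : ℕ → A) (c v m : ℕ) :
    (staircase x c v m).map (Prod.map id σ) = staircase (σ ∘ x) c v m := by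
  induction m generalizing c v with
  | zero => rfl
  | succ m ih => simp [staircase, descRow, ih]

theorem two_mul_length_staircase (x : ℕ → A) (c v m : ℕ) :
    2 * (staircase x c v m).length = (m + 1) * m := by
  induction m generalizing c v with
  | zero => rfl
  | succ m ih =>
    rw [staircase, List.length_append, mul_add, ih]
    simp only [descRow, List.length_map, List.length_reverse, List.length_range']
    ring

end Rows

section HeckeAlgebra

/-- The relations of the `0`-Hecke monoid of type `A`, for a family indexed by the letters of
all symmetric groups at once. -/
structure IsZeroHecke {M : Type*} [Mul M] (u : ℕ → M) : Prop where
  idem : ∀ a, u a * u a = u a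
  comm : ∀ a b, a + 1 < b → u a * u b = u b * u a
  braid : ∀ a, u a * (u (a + 1) * u a) = u (a + 1) * (u a * u (a + 1))

/-- The formal group law `x ⊕ y = x + y + β x y` of connective `K`-theory. -/
def formalAdd {R : Type*} [CommRing R] (β x y : R) : R := x + y + β * (x * y)

theorem formalAdd_comm {R : Type*} [CommRing R] (β x y : R) :
    formalAdd β x y = formalAdd β y x := by
  simp only [formalAdd]; ring

variable {R E : Type*} [CommRing R] [Ring E] [Algebra R E]

/-- The Fomin–Kirillov factor `h_a(x) = 1 + β x u_a`. -/
def heckeFactor (β : R) (u : ℕ → E) (a : ℕ) (x : R) : E := 1 + (β * x) • u a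

/-- The product of the factors `h_a(x)` over a list of pairs `(a, x)`. The head of the list is the
rightmost factor, so that it acts first when the `u_a` are operators. -/
def factorProd (β : R) (u : ℕ → E) (L : List (ℕ × R)) : E :=
  (L.map fun p ↦ heckeFactor β u p.1 p.2).reverse.prod

section Lists
variable (β : R) (u : ℕ → E)

@[simp]
theorem factorProd_nil : factorProd β u [] = 1 := rfl

@[simp]
theorem factorProd_cons (p : ℕ × R) (L : List (ℕ × R)) :
    factorProd β u (p :: L) = factorProd β u L * heckeFactor β u p.1 p.2 := by
  simp [factorProd]

theorem factorProd_concat (L : List (ℕ × R)) (p : ℕ × R) :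
    factorProd β u (L ++ [p]) = heckeFactor β u p.1 p.2 * factorProd β u L := by
  simp [factorProd]

@[simp]
theorem factorProd_append (L L' : List (ℕ × R)) :
    factorProd β u (L ++ L') = factorProd β u L' * factorProd β u L := by
  simp [factorProd]

theorem factorProd_eq_one {L : List (ℕ × R)} (h : ∀ p ∈ L, p.2 = 0) : factorProd β u L = 1 := by
  refine List.prod_eq_one fun e he ↦ ?_
  obtain ⟨p, hp, rfl⟩ := List.mem_map.1 (List.mem_reverse.1 he)
  simp [heckeFactor, h p hp]

/-- The letters `c, …, c + m - 1` with parameters `x_v ⊕ y, …, x_{v + m - 1} ⊕ y`. -/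
def formalRow (x : ℕ → R) (y : R) (c v m : ℕ) : List (ℕ × R) :=
  (List.range m).map fun k ↦ (c + k, formalAdd β (x (v + k)) y)

theorem formalRow_succ (x : ℕ → R) (y : R) (c v m : ℕ) :
    formalRow β x y c v (m + 1) =
      (c, formalAdd β (x v) y) :: formalRow β x y (c + 1) (v + 1) m := by
  simp only [formalRow, List.range_succ_eq_map, List.map_cons, List.map_map, add_zero]
  congr 2
  funext k
  simp only [Function.comp_apply, Nat.succ_eq_add_one, add_assoc, add_comm 1]

end Lists

variable {β : R} {u : ℕ → E}

theorem heckeFactor_mul_self (hu : IsZeroHecke u) (a : ℕ) (x y : R) :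
    heckeFactor β u a x * heckeFactor β u a y = heckeFactor β u a (formalAdd β x y) := by
  simp only [heckeFactor, formalAdd, mul_add, add_mul, one_mul, mul_one, smul_mul_assoc,
    mul_smul_comm, smul_smul, hu.idem, smul_add]
  module

theorem heckeFactor_commute (hu : IsZeroHecke u) {a b : ℕ} (h : a + 1 < b ∨ b + 1 < a) (x y : R) :
    Commute (heckeFactor β u a x) (heckeFactor β u b y) := by
  have : Commute (u a) (u b) := h.elim (hu.comm a b) fun h ↦ (hu.comm b a h).symm
  exact (Commute.one_left _).add_left
    (((Commute.one_right _).add_right (this.smul_right _)).smul_left _)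

theorem heckeFactor_yangBaxter (hu : IsZeroHecke u) (a : ℕ) (x y : R) :
    heckeFactor β u a x * heckeFactor β u (a + 1) (formalAdd β x y) * heckeFactor β u a y =
      heckeFactor β u (a + 1) y * heckeFactor β u a (formalAdd β x y) *
        heckeFactor β u (a + 1) x := by
  simp only [heckeFactor, formalAdd, mul_add, add_mul, one_mul, mul_one, smul_mul_assoc,
    mul_smul_comm, smul_smul, hu.idem, smul_add, mul_assoc, hu.braid]
  module

theorem commute_factorProd (hu : IsZeroHecke u) {a : ℕ} {L : List (ℕ × R)}
    (hL : ∀ p ∈ L, a + 1 < p.1 ∨ p.1 + 1 < a) (x : R) :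
    Commute (heckeFactor β u a x) (factorProd β u L) := by
  induction L with
  | nil => exact Commute.one_right _
  | cons p L ih =>
    rw [factorProd_cons]
    exact (ih fun q hq ↦ hL q (List.mem_cons_of_mem _ hq)).mul_right
      (heckeFactor_commute hu (hL p List.mem_cons_self) _ _)

/-- Up to the right factor `h_{a+1}(x)`, the product on the left is symmetric in `x` and `y`. -/
theorem heckeFactor_mul_mul_eq (hu : IsZeroHecke u) (a : ℕ) (x y : R) :
    heckeFactor β u a x * heckeFactor β u (a + 1) x * heckeFactor β u a y =
      (1 + (β * formalAdd β x y) • u a + (β * x * (β * y)) • (u (a + 1) * u a)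
        - (β * x * (β * y)) • (u a * u (a + 1))) * heckeFactor β u (a + 1) x := by
  simp only [heckeFactor, formalAdd, mul_add, add_mul, sub_mul, one_mul, mul_one, smul_mul_assoc,
    mul_smul_comm, smul_smul, hu.idem, smul_add, mul_assoc, hu.braid]
  module

theorem factorProd_descRow_commute (hu : IsZeroHecke u) (c m : ℕ) (x y : R) :
    Commute (factorProd β u (descRow c m x)) (factorProd β u (descRow c m y)) := by
  induction m generalizing c with
  | zero => simp [descRow]
  | succ m ih =>
    rcases m with _ | m
    · simp [descRow, Commute, SemiconjBy, heckeFactor_mul_self hu, formalAdd_comm]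
    have factor_symm (x y : R) :
        factorProd β u (descRow c (m + 2) x) * factorProd β u (descRow c (m + 2) y) =
          (1 + (β * formalAdd β x y) • u c + (β * x * (β * y)) • (u (c + 1) * u c)
            - (β * x * (β * y)) • (u c * u (c + 1))) *
          (factorProd β u (descRow (c + 1) (m + 1) x) *
            factorProd β u (descRow (c + 1) (m + 1) y)) := by
      have hc : Commute (heckeFactor β u c y) (factorProd β u (descRow (c + 2) m x)) :=
        commute_factorProd hu (fun p hp ↦ by have := (mem_descRow.1 hp).1; omega) y
      calc factorProd β u (descRow c (m + 2) x) * factorProd β u (descRow c (m + 2) y)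
        _ = heckeFactor β u c x * heckeFactor β u (c + 1) x *
              (factorProd β u (descRow (c + 2) m x) * heckeFactor β u c y) *
              factorProd β u (descRow (c + 1) (m + 1) y) := by
          rw [descRow_succ c _ x, descRow_succ c _ y, descRow_succ (c + 1) _ x]
          simp only [factorProd_concat, mul_assoc]
        _ = heckeFactor β u c x * heckeFactor β u (c + 1) x * heckeFactor β u c y *
              factorProd β u (descRow (c + 2) m x) *
              factorProd β u (descRow (c + 1) (m + 1) y) := by
          rw [← hc.eq]; simp only [mul_assoc]
        _ = _ := by
          rw [heckeFactor_mul_mul_eq hu, descRow_succ (c + 1) _ x, factorProd_concat]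
          simp only [mul_assoc]
    rw [Commute, SemiconjBy, factor_symm x y, factor_symm y x, (ih (c + 1)).eq,
      formalAdd_comm, mul_comm (β * x)]

theorem factorProd_descRow_mul_ascRow (hu : IsZeroHecke u) (c m : ℕ) (x y : R) :
    factorProd β u (descRow c (m + 1) x) * factorProd β u (ascRow c (m + 1) y) =
      factorProd β u (ascRow (c + 1) m y) * heckeFactor β u c (formalAdd β x y) *
        factorProd β u (descRow (c + 1) m x) := by
  induction m generalizing c with
  | zero => simp [descRow, ascRow, heckeFactor_mul_self hu]
  | succ m ih =>
    have hdesc : Commute (heckeFactor β u c y) (factorProd β u (descRow (c + 2) m x)) :=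
      commute_factorProd hu (fun p hp ↦ by have := (mem_descRow.1 hp).1; omega) y
    have hasc : Commute (heckeFactor β u c x) (factorProd β u (ascRow (c + 2) m y)) :=
      commute_factorProd hu (fun p hp ↦ by have := (mem_ascRow.1 hp).1; omega) x
    calc factorProd β u (descRow c (m + 2) x) * factorProd β u (ascRow c (m + 2) y)
      _ = heckeFactor β u c x * (factorProd β u (descRow (c + 1) (m + 1) x) *
            factorProd β u (ascRow (c + 1) (m + 1) y)) * heckeFactor β u c y := by
        rw [descRow_succ c, ascRow_succ c]
        simp only [factorProd_concat, factorProd_cons, mul_assoc]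
      _ = heckeFactor β u c x * factorProd β u (ascRow (c + 2) m y) *
            heckeFactor β u (c + 1) (formalAdd β x y) *
            (factorProd β u (descRow (c + 2) m x) * heckeFactor β u c y) := by
        rw [ih]; simp only [mul_assoc]
      _ = factorProd β u (ascRow (c + 2) m y) * (heckeFactor β u c x *
            heckeFactor β u (c + 1) (formalAdd β x y) * heckeFactor β u c y) *
            factorProd β u (descRow (c + 2) m x) := by
        rw [hasc.eq, ← hdesc.eq]; simp only [mul_assoc]
      _ = _ := by
        rw [heckeFactor_yangBaxter hu, ascRow_succ (c + 1), descRow_succ (c + 1)]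
        simp only [factorProd_concat, factorProd_cons, mul_assoc]

theorem factorProd_staircase_mul_ascRow (hu : IsZeroHecke u) (x : ℕ → R) (y : R) (c v m : ℕ) :
    factorProd β u (staircase x c v (m + 1)) * factorProd β u (ascRow c (m + 1) y) =
      factorProd β u (formalRow β x y c v (m + 1)) *
        factorProd β u (staircase x (c + 1) v m) := by
  induction m generalizing c v with
  | zero =>
    simp [staircase, descRow, ascRow, formalRow, heckeFactor_mul_self hu]
  | succ m ih =>
    have hc : Commute (heckeFactor β u c (formalAdd β (x v) y))
        (factorProd β u (staircase x (c + 2) (v + 1) m)) :=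
      commute_factorProd hu (fun p hp ↦ by have := (mem_staircase_imp hp).1; omega) _
    calc factorProd β u (staircase x c v (m + 2)) * factorProd β u (ascRow c (m + 2) y)
      _ = factorProd β u (staircase x (c + 1) (v + 1) (m + 1)) *
            factorProd β u (ascRow (c + 1) (m + 1) y) *
            heckeFactor β u c (formalAdd β (x v) y) *
            factorProd β u (descRow (c + 1) (m + 1) (x v)) := by
        rw [staircase, factorProd_append, mul_assoc, factorProd_descRow_mul_ascRow hu]
        simp only [mul_assoc]
      _ = factorProd β u (formalRow β x y (c + 1) (v + 1) (m + 1)) *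
            (factorProd β u (staircase x (c + 2) (v + 1) m) *
              heckeFactor β u c (formalAdd β (x v) y)) *
            factorProd β u (descRow (c + 1) (m + 1) (x v)) := by
        rw [ih]; simp only [mul_assoc]
      _ = _ := by
        rw [← hc.eq, formalRow_succ _ _ _ _ _ (m + 1), factorProd_cons, staircase,
          factorProd_append]
        simp only [mul_assoc]

/-- The generalization of the divided difference recursion for Grothendieck polynomials: the
commuting rows `descRow c m x_v` and `descRow c m x_{v + 1}` absorb `h_c(x_{v + 1})`. -/
theorem heckeFactor_mul_factorProd_staircase_swap (hu : IsZeroHecke u) (x : ℕ → R) {c v m i : ℕ}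
    (hi : i < m) :
    heckeFactor β u (c + i) (x (v + i + 1)) * factorProd β u (staircase x c v m) =
      heckeFactor β u (c + i) (x (v + i)) *
        factorProd β u (staircase (x ∘ Equiv.swap (v + i) (v + i + 1)) c v m) := by
  induction i generalizing c v m with
  | zero =>
    have expand (x : ℕ → R) (m : ℕ) : heckeFactor β u c (x (v + 1)) *
        factorProd β u (staircase x c v (m + 2)) =
          factorProd β u (staircase x (c + 2) (v + 2) m) *
            (factorProd β u (descRow c (m + 2) (x (v + 1))) *
              factorProd β u (descRow c (m + 2) (x v))) := by
      have hc : Commute (heckeFactor β u c (x (v + 1)))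
          (factorProd β u (staircase x (c + 2) (v + 2) m)) :=
        commute_factorProd hu (fun p hp ↦ by have := (mem_staircase_imp hp).1; omega) _
      rw [staircase, staircase, descRow_succ c _ (x (v + 1)), factorProd_concat]
      simp only [factorProd_append, mul_assoc, hc.left_comm]
    obtain _ | _ | m := m
    · omega
    · simp [staircase, descRow, heckeFactor_mul_self hu, formalAdd_comm]
    have tail : staircase (x ∘ Equiv.swap v (v + 1)) (c + 2) (v + 2) m =
        staircase x (c + 2) (v + 2) m := by
      refine staircase_congr (fun k hk ↦ congrArg x ?_) _ _
      exact Equiv.swap_apply_of_ne_of_ne (by omega) (by omega)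
    have expand_swap := expand (x ∘ Equiv.swap v (v + 1)) m
    simp only [Function.comp_apply, Equiv.swap_apply_left, Equiv.swap_apply_right, tail]
      at expand_swap
    simp only [add_zero]
    rw [expand, expand_swap, (factorProd_descRow_commute hu _ _ _ _).eq]
  | succ i ih =>
    obtain _ | m := m
    · omega
    have hv : (x ∘ Equiv.swap (v + (i + 1)) (v + (i + 1) + 1)) v = x v :=
      congrArg x (Equiv.swap_apply_of_ne_of_ne (by omega) (by omega))
    have shifted := ih (c := c + 1) (v := v + 1) (m := m) (by omega)
    simp only [add_assoc, add_comm 1] at shifted hv ⊢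
    rw [staircase, staircase, hv, factorProd_append, factorProd_append, ← mul_assoc, ← mul_assoc,
      shifted]

end HeckeAlgebra

section QuasiparabolicVector
variable {R M : Type*} [CommRing R] [AddCommGroup M] [Module R M]

/-- The relations satisfied by `Θ = (1,2)(3,4)⋯` under the Hecke action, for a vector `θ` acted on
by `0`-Hecke operators `u`: even letters kill `θ`, and `Θ · s_{a+1} s_a = Θ · s_{a+1} s_{a+2}`. -/
structure IsThetaVector (u : ℕ → Module.End R M) (θ : M) : Prop where
  apply_even : ∀ a, Even a → u a θ = 0
  fold : ∀ a, Even a → u a (u (a + 1) θ) = u (a + 2) (u (a + 1) θ)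

/-- The factors `x_i ⊕ x_j` of the symplectic staircase, innermost row first. Applied to a
`θ` as in `IsThetaVector`, it agrees with the staircase of size `2 t + 1`. -/
def spStaircase (β : R) (x : ℕ → R) (c v : ℕ) : ℕ → List (ℕ × R)
  | 0 => []
  | t + 1 => spStaircase β x (c + 2) (v + 1) t ++ formalRow β x (x v) (c + 1) (v + 1) (2 * t + 2)

theorem length_spStaircase (β : R) (x : ℕ → R) (c v t : ℕ) :
    (spStaircase β x c v t).length = t * (t + 1) := by
  induction t generalizing c v with
  | zero => rfl
  | succ t ih =>
    rw [spStaircase, List.length_append, ih]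
    simp only [formalRow, List.length_map, List.length_range]
    ring

variable {β : R} {u : ℕ → Module.End R M} {θ : M}

theorem IsThetaVector.heckeFactor_apply (hθ : IsThetaVector u θ) {a : ℕ} (ha : Even a) (x : R) :
    heckeFactor β u a x θ = θ := by
  simp [heckeFactor, hθ.apply_even a ha]

theorem IsThetaVector.heckeFactor_fold (hθ : IsThetaVector u θ) {a : ℕ} (ha : Even a) (x y : R) :
    heckeFactor β u a x (heckeFactor β u (a + 1) y θ) =
      heckeFactor β u (a + 2) x (heckeFactor β u (a + 1) y θ) := by
  simp [heckeFactor, hθ.fold a ha, hθ.apply_even a ha, hθ.apply_even (a + 2) (ha.add even_two)]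

theorem IsThetaVector.factorProd_descRow_apply (hu : IsZeroHecke u) (hθ : IsThetaVector u θ)
    {c : ℕ} (hc : Even c) (y : R) (t : ℕ) :
    factorProd β u (descRow c (2 * t + 1) y) θ = factorProd β u (ascRow (c + 1) (2 * t) y) θ := by
  induction t with
  | zero => simp [descRow, ascRow, hθ.heckeFactor_apply hc]
  | succ t ih =>
    set D := factorProd β u (descRow c (2 * t) y) with hD
    have even : Even (c + 2 * t) := hc.add (even_two_mul t)
    have comm {a : ℕ} (ha : c + 2 * t < a) (e : M) :
        D (heckeFactor β u a y e) = heckeFactor β u a y (D e) :=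
      (LinearMap.congr_fun (commute_factorProd hu
        (fun p hp ↦ by have := (mem_descRow.1 hp).1; omega) y).eq e).symm
    have ih : D θ = factorProd β u (ascRow (c + 1) (2 * t) y) θ := by
      rw [← ih, descRow_succ', factorProd_cons, Module.End.mul_apply, hθ.heckeFactor_apply even]
    calc factorProd β u (descRow c (2 * t + 3) y) θ
      _ = D (heckeFactor β u (c + 2 * t) y (heckeFactor β u (c + 2 * t + 1) y
            (heckeFactor β u (c + 2 * t + 2) y θ))) := by
        simp only [descRow_succ', factorProd_cons, Module.End.mul_apply, hD, add_assoc]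
      _ = D (heckeFactor β u (c + 2 * t + 2) y (heckeFactor β u (c + 2 * t + 1) y θ)) := by
        rw [hθ.heckeFactor_apply (even.add even_two), hθ.heckeFactor_fold even]
      _ = factorProd β u (ascRow (c + 1) (2 * t + 2) y) θ := by
        rw [comm (by omega), comm (by omega), ih, ascRow_succ', ascRow_succ', factorProd_concat,
          factorProd_concat]
        simp only [Module.End.mul_apply, add_assoc, add_left_comm 1, add_comm 1]

theorem IsThetaVector.factorProd_staircase_apply (hu : IsZeroHecke u) (hθ : IsThetaVector u θ)
    (x : ℕ → R) {c : ℕ} (hc : Even c) (v t : ℕ) :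
    factorProd β u (staircase x c v (2 * t + 1)) θ =
      factorProd β u (spStaircase β x c v t) θ := by
  induction t generalizing c v with
  | zero => simp [staircase, descRow, spStaircase, hθ.heckeFactor_apply hc]
  | succ t ih =>
    rw [staircase, factorProd_append, Module.End.mul_apply, hθ.factorProd_descRow_apply hu hc,
      ← Module.End.mul_apply, show 2 * (t + 1) = 2 * t + 1 + 1 by ring,
      factorProd_staircase_mul_ascRow hu, Module.End.mul_apply,
      ih (c := c + 1 + 1) (hc.add even_two),
      spStaircase, factorProd_append, Module.End.mul_apply]

end QuasiparabolicVector

section PartialAction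
variable {T T' T'' : Type*}

/-- The relations of the `0`-Hecke monoid for a family of partial maps, composed as
`Option`-valued functions; the letters act from the right. -/
structure IsZeroHeckeAction (s : ℕ → T → Option T) : Prop where
  idem : ∀ a t, (s a t).bind (s a) = s a t
  comm : ∀ a b, a + 1 < b → ∀ t, (s a t).bind (s b) = (s b t).bind (s a)
  braid : ∀ a t,
    ((s a t).bind (s (a + 1))).bind (s a) = ((s (a + 1) t).bind (s a)).bind (s (a + 1))

/-- The result of letting a word act from the right by partial maps. -/
def actWord (s : ℕ → T → Option T) (l : List ℕ) (t : T) : Option T :=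
  l.foldl (fun o a ↦ o.bind (s a)) (some t)

theorem actWord_concat (s : ℕ → T → Option T) (l : List ℕ) (a : ℕ) (t : T) :
    actWord s (l ++ [a]) t = (actWord s l t).bind (s a) := by
  simp [actWord]

theorem length_le_of_actWord {s : ℕ → T → Option T} {len : T → ℕ}
    (hlen : ∀ a t t', s a t = some t' → len t' ≤ len t + 1) {l : List ℕ} {t t' : T}
    (h : actWord s l t = some t') : len t' ≤ len t + l.length := by
  induction l using List.reverseRecOn generalizing t' with
  | nil => simp [Option.some.inj h]
  | append_singleton l a ih =>
    rw [actWord_concat] at h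
    obtain ⟨y, hy, hy'⟩ := Option.bind_eq_some_iff.1 h
    have := ih hy
    have := hlen a y t' hy'
    simp only [List.length_append, List.length_singleton]
    omega

variable {R : Type*} [CommRing R] [Fintype T]

/-- The linear extension of a partial map `F`, sending the indicator of `t` to that of `F t`, and
to `0` where `F` is undefined. -/
def pushforward [DecidableEq T'] (F : T → Option T') : (T → R) →ₗ[R] (T' → R) :=
  LinearMap.pi fun t' ↦ ∑ t with F t = some t', LinearMap.proj t

theorem pushforward_apply [DecidableEq T'] (F : T → Option T') (f : T → R) (t' : T') :
    pushforward F f t' = ∑ t with F t = some t', f t := by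
  simp [pushforward]

theorem pushforward_single [DecidableEq T] [DecidableEq T'] (F : T → Option T') (t : T) :
    pushforward F (Pi.single t (1 : R)) = (F t).elim 0 (Pi.single · 1) := by
  funext t'
  rw [pushforward_apply, Finset.sum_pi_single']
  cases h : F t <;> simp [h, Pi.single_apply, eq_comm]

theorem pushforward_comp [Fintype T'] [DecidableEq T'] [DecidableEq T'']
    (F : T → Option T') (G : T' → Option T'') :
    pushforward (R := R) G ∘ₗ pushforward F = pushforward fun t ↦ (F t).bind G := by
  classical
  refine LinearMap.pi_ext' fun t ↦ LinearMap.ext_ring ?_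
  simp only [LinearMap.comp_apply, LinearMap.coe_single, pushforward_single]
  cases F t <;> simp [pushforward_single]

variable [DecidableEq T]

/-- The operators on functions induced by a family of partial maps. -/
def actionOp (R : Type*) [CommRing R] (s : ℕ → T → Option T) (a : ℕ) : Module.End R (T → R) :=
  pushforward (s a)

theorem IsZeroHeckeAction.actionOp {s : ℕ → T → Option T} (hs : IsZeroHeckeAction s) :
    IsZeroHecke (actionOp R s) where
  idem a := (pushforward_comp _ _).trans (congrArg pushforward (funext (hs.idem a)))
  comm a b h := by
    simp only [_root_.actionOp, Module.End.mul_eq_comp, pushforward_comp, hs.comm a b h]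
  braid a := by
    simp only [_root_.actionOp, Module.End.mul_eq_comp, pushforward_comp, hs.braid a]

theorem heckeFactor_actionOp_apply (β : R) (s : ℕ → T → Option T) (a : ℕ) (x : R) (f : T → R)
    (t' : T) :
    heckeFactor β (actionOp R s) a x f t' = f t' + β * x * ∑ t with s a t = some t', f t := by
  simp [heckeFactor, actionOp, pushforward_apply]

theorem factorProd_actionOp_map {R' : Type*} [CommRing R'] (σ : R →+* R') (β : R)
    (s : ℕ → T → Option T) (L : List (ℕ × R)) (f : T → R) :
    σ ∘ factorProd β (actionOp R s) L f =
      factorProd (σ β) (actionOp R' s) (L.map (Prod.map id σ)) (σ ∘ f) := by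
  induction L generalizing f with
  | nil => rfl
  | cons p L ih =>
    rw [List.map_cons, factorProd_cons, factorProd_cons, Module.End.mul_apply, ih,
      Module.End.mul_apply]
    congr 1
    funext t
    simp [heckeFactor_actionOp_apply]

/-- When `t'` is as long as the word allows, only the term of the expanded product that uses
every letter can contribute. -/
theorem factorProd_actionOp_single_apply (β : R) {s : ℕ → T → Option T} {len : T → ℕ}
    (hlen : ∀ a t t', s a t = some t' → len t' ≤ len t + 1) (L : List (ℕ × R)) {t t' : T}
    (h : len t + L.length ≤ len t') :
    factorProd β (actionOp R s) L (Pi.single t 1) t' =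
      if actWord s (L.map Prod.fst) t = some t' then β ^ L.length * (L.map Prod.snd).prod
      else 0 := by
  induction L using List.reverseRecOn generalizing t' with
  | nil => simp [actWord, Pi.single_apply, eq_comm]
  | append_singleton L p ih =>
    rw [List.length_append, List.length_singleton] at h
    have skipped : factorProd β (actionOp R s) L (Pi.single t 1) t' = 0 := by
      rw [ih (by omega), if_neg fun hact ↦ ?_]
      have := length_le_of_actWord hlen hact
      rw [List.length_map] at this
      omega
    have used : ∀ y ∈ Finset.univ.filter (s p.1 · = some t'),
        factorProd β (actionOp R s) L (Pi.single t 1) y =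
          if actWord s (L.map Prod.fst) t = some y then β ^ L.length * (L.map Prod.snd).prod
          else 0 := fun y hy ↦ ih <| by
      have := hlen _ _ _ (Finset.mem_filter.1 hy).2
      omega
    rw [factorProd_concat, Module.End.mul_apply, heckeFactor_actionOp_apply, skipped, zero_add,
      Finset.sum_congr rfl used, List.map_append, List.map_singleton, actWord_concat]
    cases actWord s (L.map Prod.fst) t with
    | none => simp
    | some y =>
      simp only [Option.some.injEq, Option.bind_some, Finset.sum_ite_eq, Finset.mem_filter,
        Finset.mem_univ, true_and, mul_ite, mul_zero, List.map_append, List.map_singleton,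
        List.prod_append, List.prod_singleton, List.length_append, List.length_singleton]
      congr 1
      ring

end PartialAction

section HeckeSeries
variable {T : Type*} [Fintype T] [DecidableEq T] {R : Type*} [CommRing R]

/-- The Fomin–Kirillov staircase product in the variables `x_0, …, x_{m-1}`, applied to the
indicator of `t₀` through a partial action `s` of the `0`-Hecke monoid. -/
def heckeSeries (β : R) (s : ℕ → T → Option T) (t₀ : T) (x : ℕ → R) (m : ℕ) : T → R :=
  factorProd β (actionOp R s) (staircase x 0 0 m) (Pi.single t₀ 1)

theorem map_heckeSeries {R' : Type*} [CommRing R'] (σ : R →+* R') (β : R) (s : ℕ → T → Option T)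
    (t₀ : T) (x : ℕ → R) (m : ℕ) (t : T) :
    σ (heckeSeries β s t₀ x m t) = heckeSeries (σ β) s t₀ (σ ∘ x) m t := by
  have single : σ ∘ Pi.single t₀ 1 = Pi.single t₀ 1 := by
    funext t
    rw [Function.comp_apply, ← map_one σ, Pi.apply_single (fun _ ↦ σ) (fun _ ↦ map_zero σ)]
  rw [heckeSeries, heckeSeries, ← staircase_map, ← single, ← factorProd_actionOp_map]
  rfl

theorem heckeSeries_zero (β : R) (s : ℕ → T → Option T) (t₀ : T) (m : ℕ) :
    heckeSeries β s t₀ 0 m = Pi.single t₀ 1 := by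
  have : factorProd β (actionOp R s) (staircase 0 0 0 m) = 1 :=
    factorProd_eq_one _ _ fun p hp ↦ by
      obtain ⟨k, hk⟩ := (mem_staircase_imp hp).2
      exact hk.symm
  rw [heckeSeries, this, Module.End.one_apply]

theorem heckeSeries_comp_swap {s : ℕ → T → Option T} (hs : IsZeroHeckeAction s) (β : R) (t₀ : T)
    (x : ℕ → R) {m i : ℕ} (hi : i < m) (t : T) :
    heckeSeries β s t₀ x m t +
        β * x (i + 1) * ∑ y with s i y = some t, heckeSeries β s t₀ x m y =
      heckeSeries β s t₀ (x ∘ Equiv.swap i (i + 1)) m t +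
        β * x i * ∑ y with s i y = some t, heckeSeries β s t₀ (x ∘ Equiv.swap i (i + 1)) m y := by
  have symm := heckeFactor_mul_factorProd_staircase_swap (β := β) (hs.actionOp (R := R)) x
    (c := 0) (v := 0) hi
  simp only [zero_add] at symm
  have := congrFun (LinearMap.congr_fun symm (Pi.single t₀ 1)) t
  simpa only [heckeSeries, Module.End.mul_apply, heckeFactor_actionOp_apply] using this

end HeckeSeries

section GradedAction
variable {n : ℕ} {T : Type*}

/-- A partial `0`-Hecke action of the letters `a` with `a + 1 < n` on a set graded by `len`, in
which every element but `top` can be moved up. This is the combinatorial structure common to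
`S_n` and to the fixed-point-free involutions. -/
structure IsGradedHeckeAction (n : ℕ) (s : ℕ → T → Option T) (len : T → ℕ) (top : T) : Prop
    extends IsZeroHeckeAction s where
  len_eq : ∀ a t t', s a t = some t' → t ≠ t' → len t' = len t + 1
  eq_or_eq : ∀ a t t' y, s a t = some t' → t ≠ t' → s a y = some t' → y = t ∨ y = t'
  exists_step : ∀ t, t ≠ top → ∃ a t', a + 1 < n ∧ s a t = some t' ∧ t ≠ t'

variable {s : ℕ → T → Option T} {len : T → ℕ} {top t₀ : T}

theorem IsGradedHeckeAction.len_le (hs : IsGradedHeckeAction n s len top) (a : ℕ) (t t' : T)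
    (h : s a t = some t') : len t' ≤ len t + 1 := by
  by_cases htt : t = t'
  · exact htt ▸ Nat.le_succ _
  · exact (hs.len_eq a t t' h htt).le

theorem IsGradedHeckeAction.induction_from_top [Finite T] (hs : IsGradedHeckeAction n s len top)
    {P : T → Prop} (h_top : P top)
    (h_step : ∀ i j : Fin n, (j : ℕ) = i + 1 → ∀ t t', s i t = some t' → t ≠ t' → P t' → P t)
    (t : T) : P t := by
  obtain ⟨N, hN⟩ := (Set.finite_range len).bddAbove
  have len_le_N (t : T) : len t ≤ N := hN ⟨t, rfl⟩
  induction h : N - len t using Nat.strong_induction_on generalizing t with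
  | _ d ih =>
    by_cases ht : t = top
    · exact ht ▸ h_top
    obtain ⟨a, t', ha, hstep, hne⟩ := hs.exists_step t ht
    have hlen := hs.len_eq a t t' hstep hne
    have := len_le_N t'
    exact h_step ⟨a, Nat.lt_of_succ_lt ha⟩ ⟨a + 1, ha⟩ rfl t t' hstep hne
      (ih _ (by omega) t' rfl)

variable [Fintype T] [DecidableEq T]

theorem IsZeroHeckeAction.fiber_lower (hs : IsZeroHeckeAction s) {a : ℕ} {t t' : T}
    (h : s a t = some t') (hne : t ≠ t') : ({y | s a y = some t} : Finset T) = ∅ := by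
  refine Finset.filter_eq_empty_iff.2 fun y _ hy ↦ hne ?_
  have := hs.idem a y
  rw [hy, Option.bind_some, h] at this
  exact (Option.some.inj this).symm

theorem IsGradedHeckeAction.fiber_upper (hs : IsGradedHeckeAction n s len top) {a : ℕ} {t t' : T}
    (h : s a t = some t') (hne : t ≠ t') : ({y | s a y = some t'} : Finset T) = {t, t'} := by
  ext y
  simp only [Finset.mem_filter, Finset.mem_univ, true_and, Finset.mem_insert,
    Finset.mem_singleton]
  refine ⟨hs.eq_or_eq a t t' y h hne, ?_⟩
  rintro (rfl | rfl)
  · exact h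
  · simpa only [h, Option.bind_some] using hs.idem a t

end GradedAction

section HeckePolynomial
variable {n : ℕ}

/-- The variables of `MvPolynomial (Fin n) Rb` as a sequence, extended by `0`. -/
def varSeq (n : ℕ) (a : ℕ) : MvPolynomial (Fin n) Rb := if h : a < n then X ⟨a, h⟩ else 0

theorem varSeq_coe (i : Fin n) : varSeq n i = X i := by
  simp [varSeq]

theorem rename_swap_comp_varSeq {i j : Fin n} (hij : (j : ℕ) = i + 1) :
    rename (R := Rb) (Equiv.swap i j) ∘ varSeq n = varSeq n ∘ Equiv.swap (i : ℕ) (i + 1) := by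
  funext a
  by_cases ha : a < n
  · lift a to Fin n using ha
    rw [Function.comp_apply, Function.comp_apply, varSeq_coe, rename_X, ← hij,
      ← Fin.val_injective.map_swap, varSeq_coe]
  · rw [Function.comp_apply, Function.comp_apply,
      Equiv.swap_apply_of_ne_of_ne (by omega) (by omega)]
    simp [varSeq, ha]

variable {T : Type*} [Fintype T] [DecidableEq T]

/-- The coefficients of the Fomin–Kirillov staircase in all `n` variables: a power of `β` times the
Grothendieck polynomials, for a suitable partial `0`-Hecke action. -/
def heckePoly (n : ℕ) (s : ℕ → T → Option T) (t₀ : T) : T → MvPolynomial (Fin n) Rb :=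
  heckeSeries (C bb) s t₀ (varSeq n) (n - 1)

theorem C_bb_ne_zero : (C bb : MvPolynomial (Fin n) Rb) ≠ 0 :=
  C_eq_zero.not.2 Polynomial.X_ne_zero

theorem IsDivDiffB.unique {i j : Fin n} (hij : i ≠ j) {f g g' : MvPolynomial (Fin n) Rb}
    (h : IsDivDiffB i j f g) (h' : IsDivDiffB i j f g') : g = g' :=
  mul_left_cancel₀ (sub_ne_zero.2 (X_injective.ne hij)) (h.trans h'.symm)

theorem IsDivDiffB.C_mul {i j : Fin n} {f g : MvPolynomial (Fin n) Rb} (h : IsDivDiffB i j f g)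
    (r : Rb) : IsDivDiffB i j (C r * f) (C r * g) := by
  unfold IsDivDiffB at *
  simp only [map_mul, rename_C] at *
  linear_combination C r * h

variable {s : ℕ → T → Option T} {len : T → ℕ} {top t₀ : T}

theorem IsGradedHeckeAction.isDivDiffB_heckePoly (hs : IsGradedHeckeAction n s len top) (t₀ : T)
    {i j : Fin n} (hij : (j : ℕ) = i + 1) {t t' : T} (h : s i t = some t') (hne : t ≠ t') :
    IsDivDiffB i j (heckePoly n s t₀ t') (C bb * heckePoly n s t₀ t) := by
  have swapped (t : T) : rename (Equiv.swap i j) (heckePoly n s t₀ t) =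
      heckeSeries (C bb) s t₀ (varSeq n ∘ Equiv.swap (i : ℕ) (i + 1)) (n - 1) t := by
    rw [← rename_swap_comp_varSeq hij]
    simpa [heckePoly] using map_heckeSeries (rename (R := Rb) (Equiv.swap i j)).toRingHom (C bb)
      s t₀ (varSeq n) (n - 1) t
  have relation (t : T) :
      heckePoly n s t₀ t + C bb * X j * ∑ y with s i y = some t, heckePoly n s t₀ y =
        rename (Equiv.swap i j) (heckePoly n s t₀ t) + C bb * X i *
          ∑ y with s i y = some t, rename (Equiv.swap i j) (heckePoly n s t₀ y) := by
    simp only [swapped, ← varSeq_coe, hij]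
    exact heckeSeries_comp_swap hs.toIsZeroHeckeAction (C bb) t₀ (varSeq n) (by omega) t
  have lower := relation t
  rw [hs.fiber_lower h hne, Finset.sum_empty, Finset.sum_empty] at lower
  have upper := relation t'
  rw [hs.fiber_upper h hne, Finset.sum_pair hne, Finset.sum_pair hne] at upper
  simp only [IsDivDiffB, map_mul, map_add, map_one, rename_C, rename_X, Equiv.swap_apply_right]
  linear_combination C bb * X i * lower - upper

theorem IsGradedHeckeAction.heckePoly_eq (hs : IsGradedHeckeAction n s len top)
    {F : T → MvPolynomial (Fin n) Rb}
    (hF : ∀ i j : Fin n, (j : ℕ) = i + 1 → ∀ t t', s i t = some t' → t ≠ t' →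
      IsDivDiffB i j (F t') (F t))
    (h_top : heckePoly n s t₀ top = C (bb ^ len top) * F top) (t : T) :
    heckePoly n s t₀ t = C (bb ^ len t) * F t := by
  induction t using hs.induction_from_top with
  | h_top => exact h_top
  | h_step i j hij t t' h hne ih =>
    have rec_F := (hF i j hij t t' h hne).C_mul (bb ^ len t')
    rw [← ih] at rec_F
    have := (hs.isDivDiffB_heckePoly t₀ hij h hne).unique (by rintro rfl; omega) rec_F
    rw [hs.len_eq _ _ _ h hne, pow_succ', C_mul, mul_assoc] at this
    exact mul_left_cancel₀ C_bb_ne_zero this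

/-- Otherwise all coefficients would vanish by the divided difference recursion, but the one at
`t₀` has constant term `1`. -/
theorem IsGradedHeckeAction.heckePoly_top_ne_zero (hs : IsGradedHeckeAction n s len top) :
    heckePoly n s t₀ top ≠ 0 := by
  intro h
  have vanish : heckePoly n s t₀ t₀ = 0 := by
    simpa using hs.heckePoly_eq (t₀ := t₀) (F := 0) (fun i j _ _ _ _ _ ↦ by simp [IsDivDiffB])
      (by simpa using h) t₀
  have hx : constantCoeff ∘ varSeq n = 0 := by
    funext a
    simp only [Function.comp_apply, varSeq]
    split_ifs <;> simp
  have := map_heckeSeries constantCoeff (C bb) s t₀ (varSeq n) (n - 1) t₀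
  rw [hx, heckeSeries_zero, Pi.single_eq_same, ← heckePoly.eq_1, vanish, map_zero] at this
  exact zero_ne_one this

/-- The hypothesis `hL` allows a shorter word than the staircase to compute the coefficients. -/
theorem IsGradedHeckeAction.heckePoly_top (hs : IsGradedHeckeAction n s len top)
    {L : List (ℕ × MvPolynomial (Fin n) Rb)}
    (hL : heckePoly n s t₀ = factorProd (C bb) (actionOp _ s) L (Pi.single t₀ 1))
    (hlen : len t₀ + L.length ≤ len top) :
    heckePoly n s t₀ top = C (bb ^ L.length) * (L.map Prod.snd).prod := by
  have expand := factorProd_actionOp_single_apply (C bb) hs.len_le L hlen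
  rw [← hL] at expand
  split_ifs at expand with h
  · rw [expand, map_pow]
  · exact absurd expand hs.heckePoly_top_ne_zero

end HeckePolynomial

section PermutationLength
open Equiv (Perm swap)
variable {n : ℕ} {i j k l : Fin n}

theorem exists_fin_adjacent {a : ℕ} (ha : a + 1 < n) :
    ∃ i j : Fin n, (j : ℕ) = i + 1 ∧ (i : ℕ) = a :=
  ⟨⟨a, by omega⟩, ⟨a + 1, ha⟩, rfl, rfl⟩

theorem swap_lt_swap_iff (hij : (j : ℕ) = i + 1) {a b : Fin n} (h : ¬(a = i ∧ b = j))
    (h' : ¬(a = j ∧ b = i)) : swap i j a < swap i j b ↔ a < b := by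
  simp only [Equiv.swap_apply_def]
  split_ifs <;> simp only [Fin.ext_iff, Fin.lt_def] at * <;> omega

theorem swapAt_coe (hij : (j : ℕ) = i + 1) : swapAt n i = swap i j := by
  have hj : (⟨i + 1, by omega⟩ : Fin n) = j := Fin.ext hij.symm
  rw [swapAt, dif_pos (by omega), hj]

theorem swapAt_comm {a b : ℕ} (h : a + 1 < b) :
    swapAt n a * swapAt n b = swapAt n b * swapAt n a := by
  unfold swapAt
  split_ifs with ha hb hb <;> try simp
  refine (Perm.disjoint_swap_swap ?_).commute.eq
  simp
  omega

theorem swap_braid (hij : (j : ℕ) = i + 1) (hjk : (k : ℕ) = j + 1) :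
    swap i j * swap j k * swap i j = swap j k * swap i j * swap j k := by
  have hij' : j ≠ i := Fin.ne_of_val_ne (by omega)
  have hjk' : k ≠ j := Fin.ne_of_val_ne (by omega)
  have hik' : i ≠ k := Fin.ne_of_val_ne (by omega)
  rw [Equiv.swap_mul_swap_mul_swap hij'.symm hik', Equiv.swap_comm i j, Equiv.swap_comm j k,
    Equiv.swap_mul_swap_mul_swap hjk' hik'.symm, Equiv.swap_comm]

theorem apply_ne_apply_of_adjacent (hij : (j : ℕ) = i + 1) (w : Perm (Fin n)) : w i ≠ w j :=
  w.injective.ne (by rintro rfl; omega)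

theorem invLen_mul_swap (w : Perm (Fin n)) (hij : (j : ℕ) = i + 1) (hw : w i < w j) :
    invLen (w * swap i j) = invLen w + 1 := by
  have hlt : i < j := by rw [Fin.lt_def]; omega
  let e := (swap i j).prodCongr (swap i j)
  have hinv : Finset.univ.filter
        (fun p : Fin n × Fin n ↦ p.1 < p.2 ∧ (w * swap i j) p.2 < (w * swap i j) p.1) =
      insert (i, j) ((Finset.univ.filter
        fun p : Fin n × Fin n ↦ p.1 < p.2 ∧ w p.2 < w p.1).map e.toEmbedding) := by
    ext ⟨a, b⟩
    simp only [Finset.mem_filter, Finset.mem_univ, true_and, Finset.mem_insert, Prod.mk.injEq,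
      Finset.mem_map_equiv, e, Equiv.prodCongr_symm, Equiv.prodCongr_apply, Prod.map_apply,
      Equiv.symm_swap]
    rw [Perm.mul_apply, Perm.mul_apply]
    by_cases hab : a = i ∧ b = j
    · simp [hab, hlt, hw]
    by_cases hba : a = j ∧ b = i
    · simp [hba, hw.le, hlt.ne']
    rw [swap_lt_swap_iff hij hab hba, or_iff_right hab]
  rw [invLen, hinv, Finset.card_insert_of_notMem (by simp [e, hlt.le]), Finset.card_map,
    invLen]

theorem invLen_mul_swap_add_one (w : Perm (Fin n)) (hij : (j : ℕ) = i + 1) (hw : w j < w i) :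
    invLen (w * swap i j) + 1 = invLen w := by
  rw [← invLen_mul_swap (w * swap i j) hij (by simpa using hw), mul_assoc, Equiv.swap_mul_self,
    mul_one]

theorem invLen_inv (w : Perm (Fin n)) : invLen w⁻¹ = invLen w := by
  refine Finset.card_bij' (fun p _ ↦ (w⁻¹ p.2, w⁻¹ p.1)) (fun p _ ↦ (w p.2, w p.1)) ?_ ?_ ?_ ?_ <;>
    simp +contextual

theorem invLen_one : invLen (1 : Perm (Fin n)) = 0 :=
  Finset.card_eq_zero.2 (Finset.filter_eq_empty_iff.2 fun _ _ h ↦ h.1.not_gt h.2)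

theorem two_mul_invLen_revPerm : 2 * invLen (revPerm n) = n * (n - 1) := by
  have : invLen (revPerm n) = ∑ a : Fin n, (n - 1 - a) := by
    simp only [invLen, revPerm, Equiv.coe_fn_mk, Fin.rev_lt_rev, and_self, Finset.card_filter,
      Fintype.sum_prod_type]
    refine Finset.sum_congr rfl fun a _ ↦ ?_
    rw [← Finset.card_filter, Finset.filter_lt_eq_Ioi, Fin.card_Ioi]
  rw [this, Fin.sum_univ_eq_sum_range fun a ↦ n - 1 - a, Finset.sum_range_reflect (fun a ↦ a),
    mul_comm, Finset.sum_range_id_mul_two]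

theorem eq_one_of_forall_adjacent_lt {w : Perm (Fin n)}
    (h : ∀ i j : Fin n, (j : ℕ) = i + 1 → w i < w j) : w = 1 := by
  obtain _ | n := n
  · exact Subsingleton.elim _ _
  have mono : StrictMono w := Fin.strictMono_iff_lt_succ.2 fun i ↦ h _ _ (by simp)
  exact DFunLike.coe_injective ((mono.range_inj strictMono_id).1 (by
    rw [w.surjective.range_eq, Set.range_id]))

theorem exists_descent {w : Perm (Fin n)} (hw : w ≠ 1) :
    ∃ i j : Fin n, (j : ℕ) = i + 1 ∧ w j < w i := by
  contrapose! hw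
  exact eq_one_of_forall_adjacent_lt fun i j hij ↦
    (hw i j hij).lt_of_ne (apply_ne_apply_of_adjacent hij w)

theorem exists_ascent {w : Perm (Fin n)} (hw : w ≠ revPerm n) :
    ∃ i j : Fin n, (j : ℕ) = i + 1 ∧ w i < w j := by
  obtain ⟨i, j, hij, h⟩ := exists_descent (w := (revPerm n)⁻¹ * w) fun h ↦
    hw (inv_mul_eq_one.1 h).symm
  exact ⟨i, j, hij, Fin.rev_lt_rev.1 h⟩

end PermutationLength

section FPFInvolution
open Equiv (Perm swap)
variable {n : ℕ} {i j : Fin n} {z : Perm (Fin n)}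

theorem IsFPF.apply_apply (hz : IsFPF z) (a : Fin n) : z (z a) = a :=
  Perm.ext_iff.1 hz.1 a

theorem IsFPF.inv_eq (hz : IsFPF z) : z⁻¹ = z :=
  inv_eq_of_mul_eq_one_left hz.1

theorem IsFPF.conj (hz : IsFPF z) (i j : Fin n) : IsFPF (swap i j * z * swap i j) where
  left := by ext a; simp [hz.apply_apply]
  right a h := hz.2 (swap i j a) (by simpa [Equiv.swap_apply_eq_iff] using h)

theorem IsFPF.apply_eq_comm (hz : IsFPF z) : z i = j ↔ z j = i :=
  ⟨fun h ↦ h ▸ hz.apply_apply i, fun h ↦ h ▸ hz.apply_apply j⟩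

theorem IsFPF.apply_ne_of_lt (hz : IsFPF z) (hij : (j : ℕ) = i + 1) (h : z i < z j) : z i ≠ j := by
  intro e
  rw [e, hz.apply_eq_comm.1 e, Fin.lt_def] at h
  omega

theorem IsFPF.two_mul_card_lt_apply (hz : IsFPF z) :
    2 * (Finset.univ.filter fun a ↦ a < z a).card = n := by
  have flip : (Finset.univ.filter fun a ↦ ¬a < z a).card =
      (Finset.univ.filter fun a ↦ a < z a).card := by
    refine Finset.card_equiv z fun a ↦ ?_
    simp [hz.apply_apply, (hz.2 a).le_iff_lt]
  have := Finset.card_filter_add_card_filter_not (s := Finset.univ) fun a ↦ a < z a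
  rw [flip, Finset.card_univ, Fintype.card_fin] at this
  omega

/-- Inversions `p < q` are classified by the position of `z q` relative to `p`; the reflection
`(p, q) ↦ (z q, z p)` exchanges the two strict cases. -/
theorem IsFPF.invLen_eq (hz : IsFPF z) :
    invLen z = 2 * fpfLen z + (Finset.univ.filter fun a ↦ a < z a).card := by
  have reflect : (Finset.univ.filter fun p : Fin n × Fin n ↦
      p.1 < p.2 ∧ z p.2 < z p.1 ∧ p.1 < z p.2).card = fpfLen z := by
    refine Finset.card_bij' (fun p _ ↦ (z p.2, z p.1)) (fun p _ ↦ (z p.2, z p.1)) ?_ ?_ ?_ ?_ <;>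
      simp +contextual [hz.apply_apply]
  have diagonal : (Finset.univ.filter fun p : Fin n × Fin n ↦
      p.1 < p.2 ∧ z p.2 < z p.1 ∧ z p.2 = p.1).card =
        (Finset.univ.filter fun a ↦ a < z a).card := by
    refine Finset.card_bij' (fun p _ ↦ p.1) (fun a _ ↦ (a, z a)) ?_ ?_ ?_ ?_
    · simp only [Finset.mem_filter, Finset.mem_univ, true_and]
      rintro ⟨p, q⟩ ⟨hpq, -, h⟩
      exact hpq.trans_eq (hz.apply_eq_comm.1 h).symm
    · simp [hz.apply_apply]
    · simp only [Finset.mem_filter, Finset.mem_univ, true_and]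
      rintro ⟨p, q⟩ ⟨-, -, h⟩
      exact Prod.ext rfl (hz.apply_eq_comm.1 h)
    · simp
  rw [two_mul]
  nth_rewrite 2 [← reflect]
  rw [← diagonal]
  simp only [invLen, fpfLen, Finset.card_filter, ← Finset.sum_add_distrib]
  refine Finset.sum_congr rfl fun ⟨p, q⟩ _ ↦ ?_
  rcases lt_trichotomy (z q) p with h | h | h
  · simp [h, h.not_gt, h.ne, and_comm]
  · simp [h]
  · simp [h, h.not_gt, h.ne']

theorem IsFPF.two_mul_invLen (hz : IsFPF z) : 2 * invLen z = 4 * fpfLen z + n := by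
  have := hz.two_mul_card_lt_apply
  rw [hz.invLen_eq]
  omega

theorem IsFPF.fpfLen_conj (hz : IsFPF z) (hij : (j : ℕ) = i + 1) (h : z i < z j) :
    fpfLen (swap i j * z * swap i j) = fpfLen z + 1 := by
  have hzi := hz.apply_ne_of_lt hij h
  have hzj : z j ≠ i := mt hz.apply_eq_comm.2 hzi
  have left : invLen (swap i j * z) = invLen z + 1 := by
    rw [← invLen_inv, mul_inv_rev, hz.inv_eq, Equiv.swap_inv, invLen_mul_swap z hij h]
  have right := invLen_mul_swap (swap i j * z) hij (by
    rwa [Perm.mul_apply, Perm.mul_apply, Equiv.swap_apply_of_ne_of_ne (hz.2 i) hzi,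
      Equiv.swap_apply_of_ne_of_ne hzj (hz.2 j)])
  have := hz.two_mul_invLen
  have := (hz.conj i j).two_mul_invLen
  omega

theorem theta_val (hev : n % 2 = 0) (a : Fin n) :
    (theta n hev a : ℕ) = if (a : ℕ) % 2 = 0 then (a : ℕ) + 1 else a - 1 := rfl

theorem isFPF_theta (hev : n % 2 = 0) : IsFPF (theta n hev) where
  left := by
    ext a
    simp only [Perm.mul_apply, Perm.one_apply, theta_val]
    split_ifs <;> omega
  right a h := by
    rw [Fin.ext_iff, theta_val] at h
    split_ifs at h <;> omega

theorem fpfLen_theta (hev : n % 2 = 0) : fpfLen (theta n hev) = 0 := by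
  refine Finset.card_eq_zero.2 (Finset.filter_eq_empty_iff.2 fun p _ h ↦ ?_)
  simp only [Fin.lt_def, theta_val] at h
  split_ifs at h <;> omega

end FPFInvolution

section Demazure
open Equiv (Perm swap)
variable {n : ℕ} {i j k l : Fin n} {a b : ℕ}

/-- The Demazure (`0`-Hecke) product `w ∘ s_a`: right multiplication by `s_a` whenever this
increases the length. Letters out of range act trivially. -/
def demazure (a : ℕ) (w : Perm (Fin n)) : Perm (Fin n) :=
  if invLen w < invLen (w * swapAt n a) then w * swapAt n a else w

/-- The Demazure product `s_a ∘ w`. -/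
def demazureLeft (a : ℕ) (w : Perm (Fin n)) : Perm (Fin n) := (demazure a w⁻¹)⁻¹

/-- The two-sided Demazure product `s_a ∘ w ∘ s_a`. -/
def demazureConj (a : ℕ) (w : Perm (Fin n)) : Perm (Fin n) := demazureLeft a (demazure a w)

theorem demazure_coe (hij : (j : ℕ) = i + 1) (w : Perm (Fin n)) :
    demazure i w = if w i < w j then w * swap i j else w := by
  rw [demazure, swapAt_coe hij]
  refine if_congr ⟨fun h ↦ ?_, fun h ↦ ?_⟩ rfl rfl
  · refine (apply_ne_apply_of_adjacent hij w).lt_or_gt.resolve_right fun h' ↦ ?_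
    have := invLen_mul_swap_add_one w hij h'
    omega
  · rw [invLen_mul_swap w hij h]
    exact Nat.lt_succ_self _

theorem demazure_of_le (ha : n ≤ a + 1) (w : Perm (Fin n)) : demazure a w = w := by
  simp [demazure, swapAt, ha.not_gt]

theorem demazureLeft_coe (hij : (j : ℕ) = i + 1) (w : Perm (Fin n)) :
    demazureLeft i w = if w⁻¹ i < w⁻¹ j then swap i j * w else w := by
  rw [demazureLeft, demazure_coe hij]
  split_ifs <;> simp

theorem demazure_self (a : ℕ) (w : Perm (Fin n)) : demazure a (demazure a w) = demazure a w := by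
  rcases le_or_gt n (a + 1) with ha | ha
  · simp only [demazure_of_le ha]
  obtain ⟨i, j, hij, rfl⟩ := exists_fin_adjacent ha
  rcases (apply_ne_apply_of_adjacent hij w).lt_or_gt with h | h <;>
    simp [demazure_coe hij, h, h.not_gt]

theorem demazure_comm (hab : a + 1 < b) (w : Perm (Fin n)) :
    demazure a (demazure b w) = demazure b (demazure a w) := by
  rcases le_or_gt n (b + 1) with hb | hb
  · simp only [demazure_of_le hb]
  obtain ⟨k, l, hkl, rfl⟩ := exists_fin_adjacent hb
  obtain ⟨i, j, hij, rfl⟩ := exists_fin_adjacent (n := n) (a := a) (by omega)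
  have hik : i ≠ k := Fin.ne_of_val_ne (by omega)
  have hil : i ≠ l := Fin.ne_of_val_ne (by omega)
  have hjk : j ≠ k := Fin.ne_of_val_ne (by omega)
  have hjl : j ≠ l := Fin.ne_of_val_ne (by omega)
  have comm := swapAt_comm (n := n) hab
  rw [swapAt_coe hij, swapAt_coe hkl] at comm
  by_cases h1 : w i < w j <;> by_cases h2 : w k < w l <;>
    simp [demazure_coe hij, demazure_coe hkl, h1, h2, mul_assoc, comm,
      Equiv.swap_apply_of_ne_of_ne, hik, hil, hjk, hjl, hik.symm, hil.symm, hjk.symm, hjl.symm]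

theorem demazure_braid (a : ℕ) (w : Perm (Fin n)) :
    demazure a (demazure (a + 1) (demazure a w)) =
      demazure (a + 1) (demazure a (demazure (a + 1) w)) := by
  rcases le_or_gt n (a + 1 + 1) with ha | ha
  · simp only [demazure_of_le ha, demazure_self]
  obtain ⟨j, k, hjk, hj⟩ := exists_fin_adjacent ha
  obtain ⟨i, -, -, rfl⟩ := exists_fin_adjacent (n := n) (a := a) (by omega)
  have hij' : i ≠ j := Fin.ne_of_val_ne (by omega)
  have hik' : i ≠ k := Fin.ne_of_val_ne (by omega)
  have hjk' : j ≠ k := Fin.ne_of_val_ne (by omega)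
  have braid := swap_braid hj hjk
  rw [mul_assoc, mul_assoc] at braid
  rw [← hj]
  rcases (w.injective.ne hij').lt_or_gt with h1 | h1 <;>
    rcases (w.injective.ne hik').lt_or_gt with h2 | h2 <;>
      rcases (w.injective.ne hjk').lt_or_gt with h3 | h3 <;>
        first
        | exfalso; order
        | simp [demazure_coe hj, demazure_coe hjk, h1, h2, h3, h1.not_gt, h2.not_gt, h3.not_gt,
            mul_assoc, braid, Equiv.swap_apply_of_ne_of_ne, hij', hik', hik'.symm, hjk'.symm]

theorem demazureLeft_self (a : ℕ) (w : Perm (Fin n)) :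
    demazureLeft a (demazureLeft a w) = demazureLeft a w := by
  simp only [demazureLeft, inv_inv, demazure_self]

/-- The only interaction between the two sides is for `w` mapping `{i, j}` to `{k, l}`, where
multiplying on either side has the same effect. -/
theorem demazure_demazureLeft (a b : ℕ) (w : Perm (Fin n)) :
    demazure a (demazureLeft b w) = demazureLeft b (demazure a w) := by
  rcases le_or_gt n (a + 1) with ha | ha
  · simp only [demazure_of_le ha]
  rcases le_or_gt n (b + 1) with hb | hb
  · simp only [demazureLeft, demazure_of_le hb, inv_inv]
  obtain ⟨i, j, hij, rfl⟩ := exists_fin_adjacent ha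
  obtain ⟨k, l, hkl, rfl⟩ := exists_fin_adjacent hb
  have hij' : i < j := by rw [Fin.lt_def]; omega
  have hkl' : k < l := by rw [Fin.lt_def]; omega
  by_cases h : w⁻¹ k = i ∧ w⁻¹ l = j
  · have eq : demazureLeft k w = demazure i w := by
      rw [demazureLeft_coe hkl, demazure_coe hij, Equiv.swap_mul_eq_mul_swap, h.1, h.2, if_pos hij',
        ← Perm.inv_eq_iff_eq.1 h.1, ← Perm.inv_eq_iff_eq.1 h.2, if_pos hkl']
    rw [← eq, demazureLeft_self, eq, demazure_self]
  by_cases h' : w⁻¹ k = j ∧ w⁻¹ l = i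
  · have left : demazureLeft k w = w := by
      rw [demazureLeft_coe hkl, h'.1, h'.2, if_neg hij'.not_gt]
    have right : demazure i w = w := by
      rw [demazure_coe hij, ← Perm.inv_eq_iff_eq.1 h'.1, ← Perm.inv_eq_iff_eq.1 h'.2,
        if_neg hkl'.not_gt]
    rw [left, right, left]
  have left : demazureLeft k (w * swap i j) =
      if w⁻¹ k < w⁻¹ l then swap k l * (w * swap i j) else w * swap i j := by
    rw [demazureLeft_coe hkl, mul_inv_rev, Equiv.swap_inv]
    exact if_congr (swap_lt_swap_iff hij h h') rfl rfl
  have right : demazure i (swap k l * w) =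
      if w i < w j then swap k l * w * swap i j else swap k l * w := by
    simp only [Perm.inv_eq_iff_eq] at h h'
    rw [demazure_coe hij]
    exact if_congr (swap_lt_swap_iff hkl (by tauto) (by tauto)) rfl rfl
  rw [demazureLeft_coe hkl w, demazure_coe hij w, apply_ite (demazure _),
    apply_ite (demazureLeft _), left, right, demazure_coe hij, demazureLeft_coe hkl]
  split_ifs <;> simp only [mul_assoc]

theorem demazureConj_self (a : ℕ) (w : Perm (Fin n)) :
    demazureConj a (demazureConj a w) = demazureConj a w := by
  simp only [demazureConj, demazure_demazureLeft, demazure_self]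
  simp only [demazureLeft, inv_inv, demazure_self]

theorem demazureConj_comm (hab : a + 1 < b) (w : Perm (Fin n)) :
    demazureConj a (demazureConj b w) = demazureConj b (demazureConj a w) := by
  simp only [demazureConj, demazure_demazureLeft, demazure_comm hab]
  simp only [demazureLeft, inv_inv, demazure_comm hab]

theorem demazureConj_braid (a : ℕ) (w : Perm (Fin n)) :
    demazureConj a (demazureConj (a + 1) (demazureConj a w)) =
      demazureConj (a + 1) (demazureConj a (demazureConj (a + 1) w)) := by
  simp only [demazureConj, demazure_demazureLeft, demazure_braid]
  simp only [demazureLeft, inv_inv, demazure_braid]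

theorem IsFPF.demazureConj_eq {z : Perm (Fin n)} (hz : IsFPF z) (hij : (j : ℕ) = i + 1) :
    demazureConj i z = if z i < z j then swap i j * z * swap i j else z := by
  rw [demazureConj, demazure_coe hij, demazureLeft_coe hij]
  by_cases h : z i < z j
  · have hzi := hz.apply_ne_of_lt hij h
    have hzj : z j ≠ i := mt hz.apply_eq_comm.2 hzi
    rw [if_pos h, if_pos h, mul_inv_rev, hz.inv_eq, Equiv.swap_inv, Perm.mul_apply, Perm.mul_apply,
      Equiv.swap_apply_of_ne_of_ne (hz.2 i) hzi, Equiv.swap_apply_of_ne_of_ne hzj (hz.2 j),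
      if_pos h, mul_assoc]
  · rw [if_neg h, if_neg h, hz.inv_eq, if_neg h]

theorem IsFPF.demazureConj {z : Perm (Fin n)} (hz : IsFPF z) (a : ℕ) :
    IsFPF (demazureConj a z) := by
  rcases le_or_gt n (a + 1) with ha | ha
  · simpa [_root_.demazureConj, demazureLeft, demazure_of_le ha]
  obtain ⟨i, j, hij, rfl⟩ := exists_fin_adjacent ha
  rw [hz.demazureConj_eq hij]
  split_ifs
  exacts [hz.conj i j, hz]

end Demazure

section HeckeActions
open Equiv (Perm swap)
variable {n : ℕ} {i j k : Fin n} {a b : ℕ}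

theorem demazure_of_ne {w : Perm (Fin n)} (h : demazure a w ≠ w) :
    ∃ i j : Fin n, (i : ℕ) = a ∧ (j : ℕ) = i + 1 ∧ w i < w j ∧ demazure a w = w * swap i j := by
  have ha : a + 1 < n := not_le.1 fun ha ↦ h (demazure_of_le ha w)
  obtain ⟨i, j, hij, rfl⟩ := exists_fin_adjacent ha
  rw [demazure_coe hij] at h ⊢
  split_ifs at h ⊢ with hlt
  · exact ⟨i, j, rfl, hij, hlt, rfl⟩
  · exact absurd rfl h

theorem isGradedHeckeAction_demazure (n : ℕ) :
    IsGradedHeckeAction n (fun a (w : Perm (Fin n)) ↦ some (demazure a w)) invLen (revPerm n) where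
  idem a w := congrArg some (demazure_self a w)
  comm a b hab w := congrArg some (demazure_comm hab w).symm
  braid a w := congrArg some (demazure_braid a w)
  len_eq a w w' h hne := by
    obtain rfl := Option.some.inj h
    obtain ⟨i, j, -, hij, hlt, eq⟩ := demazure_of_ne hne.symm
    rw [eq, invLen_mul_swap w hij hlt]
  eq_or_eq a w w' y h hne h' := by
    obtain rfl := Option.some.inj h
    by_cases hy : demazure a y = y
    · exact .inr (hy.symm.trans (Option.some.inj h'))
    obtain ⟨i, j, rfl, hij, -, eq⟩ := demazure_of_ne hne.symm
    obtain ⟨i', j', hi', hij', -, eq'⟩ := demazure_of_ne hy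
    obtain rfl : i' = i := Fin.ext hi'
    obtain rfl : j' = j := Fin.ext (hij'.trans hij.symm)
    exact .inl (mul_right_cancel (eq'.symm.trans ((Option.some.inj h').trans eq)))
  exists_step w hw := by
    obtain ⟨i, j, hij, h⟩ := exists_ascent hw
    refine ⟨i, _, by omega, rfl, fun eq ↦ ?_⟩
    have := invLen_mul_swap w hij h
    rw [demazure_coe hij, if_pos h] at eq
    rw [← eq] at this
    omega

/-- The fixed-point-free involutions of `Fin n`. -/
abbrev FPFInvolution (n : ℕ) : Type := {z : Perm (Fin n) // IsFPF z}

instance : Fintype (FPFInvolution n) := Fintype.ofFinite _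

/-- `z` pairs the positions `a` and `a + 1`, so that the letter `a` cannot act on it. By convention
this holds for letters out of range. -/
def IsBlocked (a : ℕ) (z : Perm (Fin n)) : Prop :=
  ∀ i j : Fin n, (i : ℕ) = a → (j : ℕ) = a + 1 → z i = j

open Classical in
/-- The partial Hecke action `heckeStep` restricted to fixed-point-free involutions. -/
def fpfStep (a : ℕ) (z : FPFInvolution n) : Option (FPFInvolution n) :=
  if IsBlocked a z.1 then none else some ⟨demazureConj a z.1, z.2.demazureConj a⟩

theorem isBlocked_coe (hij : (j : ℕ) = i + 1) (z : Perm (Fin n)) : IsBlocked i z ↔ z i = j := by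
  refine ⟨fun h ↦ h i j rfl hij, fun h i' j' hi' hj' ↦ ?_⟩
  rwa [Fin.ext hi', Fin.ext (hj'.trans hij.symm)]

theorem isBlocked_of_le (ha : n ≤ a + 1) (z : Perm (Fin n)) : IsBlocked a z :=
  fun _ j _ hj ↦ by omega

theorem fpfStep_of_not_isBlocked {z : FPFInvolution n} (h : ¬IsBlocked a z.1) :
    fpfStep a z = some ⟨demazureConj a z.1, z.2.demazureConj a⟩ :=
  if_neg h

theorem fpfStep_of_lt {z : FPFInvolution n} (hij : (j : ℕ) = i + 1) (h : z.1 i < z.1 j) :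
    fpfStep i z = some ⟨swap i j * z.1 * swap i j, z.2.conj i j⟩ := by
  rw [fpfStep_of_not_isBlocked ((isBlocked_coe hij z.1).not.2 (z.2.apply_ne_of_lt hij h))]
  simp only [z.2.demazureConj_eq hij, if_pos h]

theorem map_val_fpfStep (a : ℕ) (z : FPFInvolution n) :
    (fpfStep a z).map Subtype.val = heckeStep a z.1 := by
  rcases le_or_gt n (a + 1) with ha | ha
  · rw [fpfStep, if_pos (isBlocked_of_le ha _), heckeStep, dif_neg ha.not_gt, Option.map_none]
  obtain ⟨i, j, hij, rfl⟩ := exists_fin_adjacent ha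
  have hj : (⟨i + 1, ha⟩ : Fin n) = j := Fin.ext hij.symm
  simp only [fpfStep, isBlocked_coe hij, z.2.demazureConj_eq hij, heckeStep, dif_pos ha, hj]
  rcases (apply_ne_apply_of_adjacent hij z.1).lt_or_gt with h | h
  · simp [h, z.2.apply_ne_of_lt hij h]
  · by_cases hzi : z.1 i = j
    · rw [if_pos hzi, if_neg h.not_gt, if_pos ⟨hzi, z.2.apply_eq_comm.1 hzi⟩, Option.map_none]
    · simp [h, h.not_gt, hzi, mt z.2.apply_eq_comm.2 hzi]

theorem map_val_actWord_fpfStep (l : List ℕ) (z : FPFInvolution n) :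
    (actWord fpfStep l z).map Subtype.val = heckeApply l z.1 := by
  induction l using List.reverseRecOn with
  | nil => rfl
  | append_singleton l a ih =>
    rw [actWord_concat, Option.map_bind, heckeApply, List.foldl_concat, ← heckeApply, ← ih,
      Option.bind_map]
    exact congrArg _ (funext (map_val_fpfStep a))

theorem IsFPF.isBlocked_demazureConj {z : Perm (Fin n)} (hz : IsFPF z)
    (hab : a + 1 < b ∨ b + 1 < a) : IsBlocked b (_root_.demazureConj a z) ↔ IsBlocked b z := by
  rcases le_or_gt n (b + 1) with hb | hb
  · simp only [isBlocked_of_le hb]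
  rcases le_or_gt n (a + 1) with ha | ha
  · simp only [_root_.demazureConj, demazureLeft, demazure_of_le ha, inv_inv]
  obtain ⟨i, j, hij, rfl⟩ := exists_fin_adjacent ha
  obtain ⟨k, l, hkl, rfl⟩ := exists_fin_adjacent hb
  rw [hz.demazureConj_eq hij, isBlocked_coe hkl, isBlocked_coe hkl]
  split_ifs
  · have hki : k ≠ i := Fin.ne_of_val_ne (by omega)
    have hkj : k ≠ j := Fin.ne_of_val_ne (by omega)
    have hli : l ≠ i := Fin.ne_of_val_ne (by omega)
    have hlj : l ≠ j := Fin.ne_of_val_ne (by omega)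
    rw [Perm.mul_apply, Perm.mul_apply, Equiv.swap_apply_of_ne_of_ne hki hkj,
      Equiv.swap_apply_eq_iff, Equiv.swap_apply_of_ne_of_ne hli hlj]
  · rfl

theorem fpfStep_comm (hab : a + 1 < b) (z : FPFInvolution n) :
    (fpfStep a z).bind (fpfStep b) = (fpfStep b z).bind (fpfStep a) := by
  have ha := z.2.isBlocked_demazureConj (a := b) (b := a) (.inr hab)
  have hb := z.2.isBlocked_demazureConj (a := a) (b := b) (.inl hab)
  by_cases h : IsBlocked a z.1 <;> by_cases h' : IsBlocked b z.1 <;>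
    simp [fpfStep, h, h', ha, hb, demazureConj_comm hab]

theorem fpfStep_coe (hij : (j : ℕ) = i + 1) (z : FPFInvolution n) :
    fpfStep i z = if z.1 i = j then none
      else if z.1 i < z.1 j then some ⟨swap i j * z.1 * swap i j, z.2.conj i j⟩ else some z := by
  simp only [fpfStep, isBlocked_coe hij, z.2.demazureConj_eq hij]
  split_ifs <;> rfl

theorem fpfStep_braid_of_paired (hij : (j : ℕ) = i + 1) (hjk : (k : ℕ) = j + 1)
    (z : FPFInvolution n) (paired : z.1 i = j ∨ z.1 i = k ∨ z.1 j = k) :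
    ((fpfStep i z).bind (fpfStep j)).bind (fpfStep i) = none ∧
      ((fpfStep j z).bind (fpfStep i)).bind (fpfStep j) = none := by
  obtain ⟨z, hz⟩ := z
  have hij' : i < j := by rw [Fin.lt_def]; omega
  have hjk' : j < k := by rw [Fin.lt_def]; omega
  have hik' := hij'.trans hjk'
  have outside {x : Fin n} (hi : x ≠ i) (hj : x ≠ j) (hk : x ≠ k) :
      (x < i ∧ x < j ∧ x < k) ∨ (i < x ∧ j < x ∧ k < x) := by
    simp only [Fin.lt_def, ne_eq, Fin.ext_iff] at *
    omega
  have hzi := hz.2 i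
  have hzj := hz.2 j
  have hzk := hz.2 k
  have hzij := z.injective.ne hij'.ne
  have hzjk := z.injective.ne hjk'.ne
  have hzik := z.injective.ne hik'.ne
  have fi (y) := fpfStep_coe (z := y) hij
  have fj (y) := fpfStep_coe (z := y) hjk
  clear hij hjk
  rcases paired with h | h | h <;> have h' := hz.apply_eq_comm.1 h
  · rcases outside (by order) (by order) hzk with ⟨_, _, _⟩ | ⟨_, _, _⟩ <;>
      simp [*, LT.lt.ne, LT.lt.ne', LT.lt.not_gt, Equiv.swap_apply_of_ne_of_ne]
  · rcases outside (by order) hzj (by order) with ⟨_, _, _⟩ | ⟨_, _, _⟩ <;>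
      simp [*, LT.lt.ne, LT.lt.ne', LT.lt.not_gt, Equiv.swap_apply_of_ne_of_ne]
  · rcases outside hzi (by order) (by order) with ⟨_, _, _⟩ | ⟨_, _, _⟩ <;>
      simp [*, LT.lt.ne, LT.lt.ne', LT.lt.not_gt, Equiv.swap_apply_of_ne_of_ne]

theorem fpfStep_braid (a : ℕ) (z : FPFInvolution n) :
    ((fpfStep a z).bind (fpfStep (a + 1))).bind (fpfStep a) =
      ((fpfStep (a + 1) z).bind (fpfStep a)).bind (fpfStep (a + 1)) := by
  rcases le_or_gt n (a + 1 + 1) with ha | ha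
  · have undefined (y : FPFInvolution n) : fpfStep (a + 1) y = none :=
      if_pos (isBlocked_of_le ha _)
    simp [undefined]
  obtain ⟨j, k, hjk, hj⟩ := exists_fin_adjacent ha
  obtain ⟨i, -, -, rfl⟩ := exists_fin_adjacent (n := n) (a := a) (by omega)
  have hij' : i ≠ j := Fin.ne_of_val_ne (by omega)
  have hik' : i ≠ k := Fin.ne_of_val_ne (by omega)
  have hjk' : j ≠ k := Fin.ne_of_val_ne (by omega)
  by_cases free : z.1 i ≠ j ∧ z.1 i ≠ k ∧ z.1 j ≠ k
  · have free_left {y : Perm (Fin n)} (hy : IsFPF y) (free : y i ≠ j ∧ y i ≠ k ∧ y j ≠ k) :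
        demazureConj i y i ≠ j ∧ demazureConj i y i ≠ k ∧ demazureConj i y j ≠ k := by
      rw [hy.demazureConj_eq hj]
      split_ifs
      · simp [Equiv.swap_apply_eq_iff, Equiv.swap_apply_of_ne_of_ne hik'.symm hjk'.symm, free,
          mt hy.apply_eq_comm.2 free.1]
      · exact free
    have free_right {y : Perm (Fin n)} (hy : IsFPF y) (free : y i ≠ j ∧ y i ≠ k ∧ y j ≠ k) :
        demazureConj j y i ≠ j ∧ demazureConj j y i ≠ k ∧ demazureConj j y j ≠ k := by
      rw [hy.demazureConj_eq hjk]
      split_ifs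
      · simp [Equiv.swap_apply_eq_iff, Equiv.swap_apply_of_ne_of_ne hij' hik', free,
          mt hy.apply_eq_comm.2 free.2.2]
      · exact free
    have braid := demazureConj_braid i z.1
    rw [← hj] at braid ⊢
    have h1 := free_left z.2 free
    have h2 := free_right (z.2.demazureConj i) h1
    have h3 := free_right z.2 free
    have h4 := free_left (z.2.demazureConj j) h3
    simp only [fpfStep, isBlocked_coe hj, isBlocked_coe hjk, free, h1, h2, h3, h4, if_false,
      Option.bind_some, braid]
  · rw [← hj]
    have := fpfStep_braid_of_paired hj hjk z (by tauto)
    rw [this.1, this.2]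

theorem IsFPF.isBlocked_demazureConj_self {z : Perm (Fin n)} (hz : IsFPF z) :
    IsBlocked a (_root_.demazureConj a z) ↔ IsBlocked a z := by
  rcases le_or_gt n (a + 1) with ha | ha
  · simp only [isBlocked_of_le ha]
  obtain ⟨i, j, hij, rfl⟩ := exists_fin_adjacent ha
  rw [hz.demazureConj_eq hij, isBlocked_coe hij, isBlocked_coe hij]
  split_ifs
  · rw [Perm.mul_apply, Perm.mul_apply, Equiv.swap_apply_left, Equiv.swap_apply_eq_iff,
      Equiv.swap_apply_right, hz.apply_eq_comm]
  · rfl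

theorem fpfStep_idem (a : ℕ) (z : FPFInvolution n) :
    (fpfStep a z).bind (fpfStep a) = fpfStep a z := by
  have ha := z.2.isBlocked_demazureConj_self (a := a)
  by_cases h : IsBlocked a z.1 <;> simp [fpfStep, h, ha, demazureConj_self]

theorem fpfStep_of_ne {z z' : FPFInvolution n} (h : fpfStep a z = some z') (hne : z ≠ z') :
    ∃ i j : Fin n, (i : ℕ) = a ∧ (j : ℕ) = i + 1 ∧ z.1 i < z.1 j ∧
      z'.1 = swap i j * z.1 * swap i j := by
  have ha : a + 1 < n := not_le.1 fun ha ↦ by simp [fpfStep, isBlocked_of_le ha] at h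
  obtain ⟨i, j, hij, rfl⟩ := exists_fin_adjacent ha
  rw [fpfStep_coe hij] at h
  split_ifs at h with _ hlt
  · exact ⟨i, j, rfl, hij, hlt, congrArg Subtype.val (Option.some.inj h).symm⟩
  · exact absurd (Option.some.inj h) hne

theorem isFPF_revPerm (hev : n % 2 = 0) : IsFPF (revPerm n) where
  left := Equiv.ext Fin.rev_rev
  right i h := by
    have := congrArg Fin.val (show Fin.rev i = i from h)
    rw [Fin.val_rev] at this
    omega

theorem isGradedHeckeAction_fpfStep (hev : n % 2 = 0) :
    IsGradedHeckeAction n fpfStep (fun z : FPFInvolution n ↦ fpfLen z.1)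
      ⟨revPerm n, isFPF_revPerm hev⟩ where
  idem := fpfStep_idem
  comm _ _ := fpfStep_comm
  braid := fpfStep_braid
  len_eq a z z' h hne := by
    obtain ⟨i, j, -, hij, hlt, eq⟩ := fpfStep_of_ne h hne
    rw [eq, z.2.fpfLen_conj hij hlt]
  eq_or_eq a z z' y h hne h' := by
    by_cases hy : y = z'
    · exact .inr hy
    obtain ⟨i, j, rfl, hij, -, eq⟩ := fpfStep_of_ne h hne
    obtain ⟨i', j', hi', hij', -, eq'⟩ := fpfStep_of_ne h' hy
    obtain rfl : i' = i := Fin.ext hi'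
    obtain rfl : j' = j := Fin.ext (hij'.trans hij.symm)
    exact .inl (Subtype.ext (mul_left_cancel (mul_right_cancel (eq'.symm.trans eq))))
  exists_step z hz := by
    obtain ⟨i, j, hij, h⟩ := exists_ascent fun h ↦ hz (Subtype.ext h)
    refine ⟨i, _, by omega, fpfStep_of_lt hij h, fun eq ↦ ?_⟩
    have := z.2.fpfLen_conj hij h
    have eq' : z.1 = swap i j * z.1 * swap i j := congrArg Subtype.val eq
    rw [← eq'] at this
    omega

end HeckeActions

section ReducedWords
open Equiv (Perm swap)
variable {n : ℕ} {i j k l : Fin n} {w : Perm (Fin n)}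

theorem wordToPerm_concat (p : List ℕ) (a : ℕ) :
    wordToPerm n (p ++ [a]) = wordToPerm n p * swapAt n a := by
  simp [wordToPerm]

theorem invLen_wordToPerm_le (p : List ℕ) : invLen (wordToPerm n p) ≤ p.length := by
  induction p using List.reverseRecOn with
  | nil => exact invLen_one.le
  | append_singleton p a ih =>
    rw [wordToPerm_concat, List.length_append, List.length_singleton]
    rcases le_or_gt n (a + 1) with ha | ha
    · rw [swapAt, dif_neg ha.not_gt, mul_one]
      omega
    obtain ⟨i, j, hij, rfl⟩ := exists_fin_adjacent ha
    rw [swapAt_coe hij]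
    rcases (apply_ne_apply_of_adjacent hij (wordToPerm n p)).lt_or_gt with h | h
    · have := invLen_mul_swap _ hij h
      omega
    · have := invLen_mul_swap_add_one _ hij h
      omega

theorem isReducedWord_concat (hij : (j : ℕ) = i + 1) (p : List ℕ) :
    IsReducedWord n w (p ++ [(i : ℕ)]) ↔ w j < w i ∧ IsReducedWord n (w * swap i j) p := by
  have perm : wordToPerm n (p ++ [(i : ℕ)]) = w ↔ wordToPerm n p = w * swap i j := by
    rw [wordToPerm_concat, swapAt_coe hij, ← eq_mul_inv_iff_mul_eq, Equiv.swap_inv]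
  have range : (∀ a ∈ p ++ [(i : ℕ)], a + 1 < n) ↔ ∀ a ∈ p, a + 1 < n := by
    have : (i : ℕ) + 1 < n := hij ▸ j.isLt
    simp [or_imp, forall_and, this]
  rw [IsReducedWord, IsReducedWord, perm, range, List.length_append, List.length_singleton]
  rcases (apply_ne_apply_of_adjacent hij w).lt_or_gt with h | h
  · have := invLen_mul_swap w hij h
    refine iff_of_false (fun ⟨_, hp, hlen⟩ ↦ ?_) (fun h' ↦ h.not_gt h'.1)
    have length_ge : invLen (w * swap i j) ≤ p.length := hp ▸ invLen_wordToPerm_le p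
    rw [this, ← hlen] at length_ge
    omega
  · have := invLen_mul_swap_add_one w hij h
    rw [← this, Nat.add_right_cancel_iff]
    exact (and_iff_right h).symm

theorem isReducedWord_nil : IsReducedWord n 1 [] :=
  ⟨by simp, rfl, invLen_one.symm⟩

theorem exists_isReducedWord (w : Perm (Fin n)) : ∃ p, IsReducedWord n w p := by
  induction h : invLen w using Nat.strong_induction_on generalizing w with
  | _ N ih =>
    by_cases hw : w = 1
    · exact ⟨[], hw ▸ isReducedWord_nil⟩
    obtain ⟨i, j, hij, hlt⟩ := exists_descent hw
    have := invLen_mul_swap_add_one w hij hlt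
    obtain ⟨p, hp⟩ := ih _ (by omega) (w * swap i j) rfl
    exact ⟨p ++ [(i : ℕ)], (isReducedWord_concat hij p).2 ⟨hlt, hp⟩⟩

theorem exists_isReducedWord_comm (hij : (j : ℕ) = i + 1) (hkl : (l : ℕ) = k + 1)
    (hik : (i : ℕ) + 1 < k) (h : w j < w i) (h' : w l < w k) :
    ∃ q : List ℕ, IsReducedWord n w (q ++ [(k : ℕ)] ++ [(i : ℕ)]) ∧
      IsReducedWord n w (q ++ [(i : ℕ)] ++ [(k : ℕ)]) := by
  have hik' : i ≠ k := Fin.ne_of_val_ne (by omega)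
  have hil' : i ≠ l := Fin.ne_of_val_ne (by omega)
  have hjk' : j ≠ k := Fin.ne_of_val_ne (by omega)
  have hjl' : j ≠ l := Fin.ne_of_val_ne (by omega)
  have comm := swapAt_comm (n := n) hik
  rw [swapAt_coe hij, swapAt_coe hkl] at comm
  obtain ⟨q, hq⟩ := exists_isReducedWord (w * swap i j * swap k l)
  refine ⟨q, ?_, ?_⟩ <;> simp only [isReducedWord_concat hij, isReducedWord_concat hkl]
  · refine ⟨h, ?_, hq⟩
    simp [Equiv.swap_apply_of_ne_of_ne, *, Ne.symm]
  · refine ⟨h', ?_, by rwa [mul_assoc, ← comm, ← mul_assoc]⟩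
    simp [Equiv.swap_apply_of_ne_of_ne, *]

theorem exists_isReducedWord_braid (hij : (j : ℕ) = i + 1) (hjk : (k : ℕ) = j + 1)
    (h : w j < w i) (h' : w k < w j) :
    ∃ q : List ℕ, IsReducedWord n w (q ++ [(i : ℕ)] ++ [(j : ℕ)] ++ [(i : ℕ)]) ∧
      IsReducedWord n w (q ++ [(j : ℕ)] ++ [(i : ℕ)] ++ [(j : ℕ)]) := by
  have hij' : i ≠ j := Fin.ne_of_val_ne (by omega)
  have hik' : i ≠ k := Fin.ne_of_val_ne (by omega)
  have hjk' : j ≠ k := Fin.ne_of_val_ne (by omega)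
  have fix_i := Equiv.swap_apply_of_ne_of_ne hij' hik'
  have fix_k := Equiv.swap_apply_of_ne_of_ne hik'.symm hjk'.symm
  have braid := swap_braid hij hjk
  obtain ⟨q, hq⟩ := exists_isReducedWord (w * swap i j * swap j k * swap i j)
  refine ⟨q, ?_, ?_⟩ <;> simp only [isReducedWord_concat hij, isReducedWord_concat hjk]
  · refine ⟨h, ?_, ?_, hq⟩
    · simpa [fix_k] using h'.trans h
    · simpa [fix_i, fix_k] using h'
  · refine ⟨h', ?_, ?_, by simpa only [mul_assoc, ← braid] using hq⟩
    · simpa [fix_i] using h'.trans h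
    · simpa [fix_i, fix_k] using h

end ReducedWords

section Matsumoto
open Equiv (Perm swap)
variable {n : ℕ} {T : Type*} {s : ℕ → T → Option T} {w : Perm (Fin n)}

theorem IsZeroHeckeAction.exists_actWord_eq (hs : IsZeroHeckeAction s) {a b : ℕ} (hab : a < b)
    {p p' : List ℕ} (h : IsReducedWord n w (p ++ [a])) (h' : IsReducedWord n w (p' ++ [b]))
    (t : T) : ∃ q q' : List ℕ, IsReducedWord n w (q ++ [a]) ∧ IsReducedWord n w (q' ++ [b]) ∧
      actWord s (q ++ [a]) t = actWord s (q' ++ [b]) t := by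
  obtain ⟨i, j, hij, rfl⟩ := exists_fin_adjacent (h.1 a (by simp))
  obtain ⟨k, l, hkl, rfl⟩ := exists_fin_adjacent (h'.1 b (by simp))
  have hi := ((isReducedWord_concat hij p).1 h).1
  have hk := ((isReducedWord_concat hkl p').1 h').1
  rcases (Nat.succ_le_of_lt hab).eq_or_lt with hik | hik
  · obtain rfl : j = k := Fin.ext (hij.trans hik)
    obtain ⟨q, hq, hq'⟩ := exists_isReducedWord_braid hij hkl hi hk
    refine ⟨_, _, hq, hq', ?_⟩
    simp only [actWord_concat, hij]
    cases actWord s q t with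
    | none => rfl
    | some y => exact hs.braid i y
  · obtain ⟨q, hq, hq'⟩ := exists_isReducedWord_comm hij hkl hik hi hk
    refine ⟨_, _, hq, hq', ?_⟩
    simp only [actWord_concat]
    cases actWord s q t with
    | none => rfl
    | some y => exact (hs.comm i k hik y).symm

/-- Matsumoto's theorem for partial actions of the `0`-Hecke monoid. -/
theorem IsZeroHeckeAction.actWord_eq (hs : IsZeroHeckeAction s) {p p' : List ℕ}
    (h : IsReducedWord n w p) (h' : IsReducedWord n w p') (t : T) :
    actWord s p t = actWord s p' t := by
  induction hN : p.length generalizing w p p' with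
  | zero =>
    rw [List.eq_nil_of_length_eq_zero hN,
      List.eq_nil_of_length_eq_zero (h'.2.2.trans (h.2.2.symm.trans hN))]
  | succ N ih =>
    have same_last {a : ℕ} {q q' : List ℕ} (hq : IsReducedWord n w (q ++ [a]))
        (hq' : IsReducedWord n w (q' ++ [a])) :
        actWord s (q ++ [a]) t = actWord s (q' ++ [a]) t := by
      obtain ⟨i, j, hij, rfl⟩ := exists_fin_adjacent (hq.1 a (by simp))
      have hlen : (q ++ [(i : ℕ)]).length = N + 1 := by rw [hq.2.2, ← h.2.2, hN]
      rw [isReducedWord_concat hij] at hq hq'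
      rw [actWord_concat, actWord_concat, ih hq.2 hq'.2 (by simpa using hlen)]
    have hN' : p'.length = N + 1 := h'.2.2.trans (h.2.2.symm.trans hN)
    obtain ⟨q, a, rfl⟩ := (List.eq_nil_or_concat' p).resolve_left (by rintro rfl; simp at hN)
    obtain ⟨q', b, rfl⟩ := (List.eq_nil_or_concat' p').resolve_left (by rintro rfl; simp at hN')
    rcases lt_trichotomy a b with hab | rfl | hab
    · obtain ⟨r, r', hr, hr', e⟩ := hs.exists_actWord_eq hab h h' t
      exact (same_last h hr).trans (e.trans (same_last hr' h'))
    · exact same_last h h'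
    · obtain ⟨r, r', hr, hr', e⟩ := hs.exists_actWord_eq hab h' h t
      exact (same_last h hr').trans (e.symm.trans (same_last hr h'))

/-- The action of a permutation on `t`, through a reduced word. -/
def actPerm (s : ℕ → T → Option T) (t : T) (w : Perm (Fin n)) : Option T :=
  actWord s (exists_isReducedWord w).choose t

theorem IsZeroHeckeAction.actPerm_eq (hs : IsZeroHeckeAction s) {p : List ℕ}
    (h : IsReducedWord n w p) (t : T) : actPerm s t w = actWord s p t :=
  hs.actWord_eq (exists_isReducedWord w).choose_spec h t

theorem IsZeroHeckeAction.actPerm_one (hs : IsZeroHeckeAction s) (t : T) :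
    actPerm s t (1 : Perm (Fin n)) = some t :=
  hs.actPerm_eq isReducedWord_nil t

theorem IsZeroHeckeAction.actPerm_demazure (hs : IsZeroHeckeAction s) {a : ℕ} (ha : a + 1 < n)
    (t : T) (w : Perm (Fin n)) : actPerm s t (demazure a w) = (actPerm s t w).bind (s a) := by
  obtain ⟨i, j, hij, rfl⟩ := exists_fin_adjacent ha
  rw [demazure_coe hij]
  rcases (apply_ne_apply_of_adjacent hij w).lt_or_gt with h | h
  · obtain ⟨p, hp⟩ := exists_isReducedWord w
    have concat : IsReducedWord n (w * swap i j) (p ++ [(i : ℕ)]) := by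
      rw [isReducedWord_concat hij, mul_assoc, Equiv.swap_mul_self, mul_one]
      exact ⟨by simpa using h, hp⟩
    rw [if_pos h, hs.actPerm_eq concat, hs.actPerm_eq hp, actWord_concat]
  · obtain ⟨p, hp⟩ := exists_isReducedWord (w * swap i j)
    rw [if_neg h.not_gt, hs.actPerm_eq ((isReducedWord_concat hij p).2 ⟨h, hp⟩), actWord_concat,
      Option.bind_assoc]
    exact congrArg _ (funext fun y ↦ (hs.idem i y).symm)

end Matsumoto

section Atoms
open Equiv (Perm)
variable {n : ℕ}

/-- `Θ` as an element of `FPFInvolution n`. -/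
def fpfTheta (hev : n % 2 = 0) : FPFInvolution n := ⟨theta n hev, isFPF_theta hev⟩

theorem mem_Bfpf_iff (hev : n % 2 = 0) (z : FPFInvolution n) (w : Perm (Fin n)) :
    w ∈ Bfpf n hev z.1 ↔ actPerm fpfStep (fpfTheta hev) w = some z := by
  have hs := (isGradedHeckeAction_fpfStep hev).toIsZeroHeckeAction
  have act {p : List ℕ} (hp : IsReducedWord n w p) :
      heckeApply p (theta n hev) = some z.1 ↔ actPerm fpfStep (fpfTheta hev) w = some z := by
    rw [hs.actPerm_eq hp, ← (Option.map_injective Subtype.val_injective).eq_iff,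
      map_val_actWord_fpfStep]
    rfl
  simp only [Bfpf, Finset.mem_filter, Finset.mem_univ, true_and]
  refine ⟨fun ⟨p, hp, h⟩ ↦ (act hp).1 h, fun h ↦ ?_⟩
  obtain ⟨p, hp⟩ := exists_isReducedWord w
  exact ⟨p, hp, (act hp).2 h⟩

theorem fpfLen_le_invLen_of_mem_Bfpf (hev : n % 2 = 0) {z : FPFInvolution n} {w : Perm (Fin n)}
    (hw : w ∈ Bfpf n hev z.1) : fpfLen z.1 ≤ invLen w := by
  have hs := isGradedHeckeAction_fpfStep hev
  obtain ⟨p, hp⟩ := exists_isReducedWord w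
  rw [mem_Bfpf_iff, hs.actPerm_eq hp] at hw
  have := length_le_of_actWord hs.len_le hw
  rwa [fpfTheta, fpfLen_theta, zero_add, hp.2.2] at this

variable {T T' R : Type*} [CommRing R] [Fintype T] [DecidableEq T] [Fintype T'] [DecidableEq T']

theorem pushforward_factorProd {s : ℕ → T → Option T} {s' : ℕ → T' → Option T'}
    {F : T → Option T'} (β : R) {L : List (ℕ × R)}
    (hF : ∀ p ∈ L, ∀ t, (s p.1 t).bind F = (F t).bind (s' p.1)) (f : T → R) :
    pushforward F (factorProd β (actionOp R s) L f) =
      factorProd β (actionOp R s') L (pushforward F f) := by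
  induction L generalizing f with
  | nil => rfl
  | cons p L ih =>
    have step (g : T → R) :
        pushforward F (actionOp R s p.1 g) = actionOp R s' p.1 (pushforward F g) := by
      rw [actionOp, actionOp, ← LinearMap.comp_apply, ← LinearMap.comp_apply, pushforward_comp,
        pushforward_comp, funext (hF p List.mem_cons_self)]
    rw [factorProd_cons, factorProd_cons, Module.End.mul_apply, Module.End.mul_apply,
      ih fun q hq ↦ hF q (List.mem_cons_of_mem p hq)]
    simp [heckeFactor, step]

theorem heckePoly_fpfStep_eq_sum (hev : n % 2 = 0) (z : FPFInvolution n) :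
    heckePoly n fpfStep (fpfTheta hev) z =
      ∑ w ∈ Bfpf n hev z.1, heckePoly n (fun a w ↦ some (demazure a w)) 1 w := by
  have hs := (isGradedHeckeAction_fpfStep hev).toIsZeroHeckeAction
  have intertwine := pushforward_factorProd (s := fun a (w : Perm (Fin n)) ↦ some (demazure a w))
    (s' := fpfStep) (F := actPerm fpfStep (fpfTheta hev)) (C bb)
    (L := staircase (varSeq n) 0 0 (n - 1))
    (fun p hp w ↦ by
      have := (mem_staircase_imp hp).1.2
      exact hs.actPerm_demazure (by omega) _ w)
    (Pi.single 1 1)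
  rw [pushforward_single, hs.actPerm_one, Option.elim_some] at intertwine
  rw [heckePoly, heckeSeries, ← intertwine, pushforward_apply]
  refine Finset.sum_congr (Finset.ext fun w ↦ ?_) fun _ _ ↦ rfl
  simp [mem_Bfpf_iff]

end Atoms

section TopElements
open Equiv (Perm swap)
variable {n : ℕ}

theorem prod_staircase {R : Type*} [CommRing R] (x : ℕ → R) (c v m : ℕ) :
    ((staircase x c v m).map Prod.snd).prod = ∏ a ∈ Finset.range m, x (v + a) ^ (m - a) := by
  induction m generalizing c v with
  | zero => rfl
  | succ m ih =>
    have row : ((descRow c (m + 1) (x v)).map Prod.snd).prod = x v ^ (m + 1) := by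
      simp [descRow, Function.comp_def]
    rw [staircase, List.map_append, List.prod_append, row, ih, Finset.prod_range_succ', mul_comm]
    simp only [Nat.add_sub_add_right, add_assoc, add_comm 1, add_zero, Nat.sub_zero]

theorem prod_staircase_varSeq (n : ℕ) :
    ((staircase (varSeq n) 0 0 (n - 1)).map Prod.snd).prod = grTop n := by
  have fin_prod : grTop n = ∏ a : Fin n, varSeq n a ^ (n - 1 - a) :=
    Finset.prod_congr rfl fun a _ ↦ by rw [varSeq_coe]
  rw [prod_staircase, fin_prod, Fin.prod_univ_eq_prod_range fun a ↦ varSeq n a ^ (n - 1 - a)]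
  cases n with
  | zero => rfl
  | succ n => simp [Finset.prod_range_succ]

theorem prod_spStaircase {R : Type*} [CommRing R] (β : R) (x : ℕ → R) (c v t : ℕ) :
    ((spStaircase β x c v t).map Prod.snd).prod = ∏ a ∈ Finset.range t,
      ∏ b ∈ Finset.range (2 * (t - a)), formalAdd β (x (v + a + 1 + b)) (x (v + a)) := by
  induction t generalizing c v with
  | zero => rfl
  | succ t ih =>
    have row (m : ℕ) : ((formalRow β x (x v) (c + 1) (v + 1) m).map Prod.snd).prod =
        ∏ b ∈ Finset.range m, formalAdd β (x (v + 1 + b)) (x v) := by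
      rw [formalRow, List.map_map]
      rfl
    rw [spStaircase, List.map_append, List.prod_append, row, ih,
      Finset.prod_range_succ' (n := t)]
    refine congrArg₂ (· * ·) (Finset.prod_congr rfl fun a _ ↦ ?_) rfl
    rw [Nat.add_sub_add_right, Nat.add_right_comm v 1 a, Nat.add_assoc v a 1]

theorem prod_spStaircase_varSeq (t : ℕ) :
    ((spStaircase (C bb) (varSeq (2 * t + 2)) 0 0 t).map Prod.snd).prod = spTop (2 * t + 2) := by
  set f : ℕ → ℕ → MvPolynomial (Fin (2 * t + 2)) Rb :=
    fun a b ↦ formalAdd (C bb) (varSeq (2 * t + 2) b) (varSeq (2 * t + 2) a)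
  have fin_prod : spTop (2 * t + 2) = ∏ a : Fin (2 * t + 2), ∏ b : Fin (2 * t + 2),
      if (a : ℕ) < b ∧ (a : ℕ) + b + 2 ≤ 2 * t + 2 then f a b else 1 := by
    rw [spTop, Finset.prod_filter, Fintype.prod_prod_type]
    refine Finset.prod_congr rfl fun a _ ↦ Finset.prod_congr rfl fun b _ ↦
      if_congr Iff.rfl ?_ rfl
    simp only [f, varSeq_coe, oplus, formalAdd]
    ring
  have row (a : ℕ) : (∏ b : Fin (2 * t + 2), if a < b ∧ a + b + 2 ≤ 2 * t + 2 then f a b else 1) =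
      ∏ b ∈ Finset.range (2 * (t - a)), f a (a + 1 + b) := by
    have interval : (Finset.range (2 * t + 2)).filter (fun b ↦ a < b ∧ a + b + 2 ≤ 2 * t + 2) =
        Finset.Ico (a + 1) (2 * t + 1 - a) := by
      ext b
      simp only [Finset.mem_filter, Finset.mem_range, Finset.mem_Ico]
      omega
    rw [Fin.prod_univ_eq_prod_range fun b ↦ if a < b ∧ a + b + 2 ≤ 2 * t + 2 then f a b else 1,
      ← Finset.prod_filter, interval, Finset.prod_Ico_eq_prod_range,
      show 2 * t + 1 - a - (a + 1) = 2 * (t - a) by omega]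
  simp only [fin_prod, row]
  rw [Fin.prod_univ_eq_prod_range fun a ↦ ∏ b ∈ Finset.range (2 * (t - a)), f a (a + 1 + b),
    prod_spStaircase]
  simp only [zero_add]
  refine Finset.prod_subset (Finset.range_subset_range.2 (by omega)) fun a _ ha ↦ ?_
  rw [Finset.mem_range, not_lt] at ha
  rw [Nat.sub_eq_zero_of_le ha]
  rfl

theorem fpfStep_theta_even (hev : n % 2 = 0) {a : ℕ} (ha : Even a) :
    fpfStep a (fpfTheta hev) = none := by
  refine if_pos fun i j hi hj ↦ Fin.ext ?_
  rw [fpfTheta, theta_val, if_pos (hi ▸ Nat.even_iff.1 ha), hi, hj]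

theorem IsFPF.conj_eq_conj {y : Perm (Fin n)} (hy : IsFPF y) {i j k l : Fin n} (hi : y i = k)
    (hj : y j = l) (comm : Commute (swap i j) (swap k l)) :
    swap i j * y * swap i j = swap k l * y * swap k l := by
  have move_left : swap i j * y = y * swap k l := by
    rw [Equiv.swap_mul_eq_mul_swap, hy.inv_eq, hi, hj]
  have move_right : swap k l * y = y * swap i j := by
    rw [Equiv.swap_mul_eq_mul_swap, hy.inv_eq, hy.apply_eq_comm.1 hi, hy.apply_eq_comm.1 hj]
  rw [move_left, move_right, mul_assoc, mul_assoc, comm.eq]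

theorem fpfStep_fold {i j k l : Fin n} (hij : (j : ℕ) = i + 1) (hjk : (k : ℕ) = j + 1)
    (hkl : (l : ℕ) = k + 1) {z : FPFInvolution n} (hi : z.1 i = j) (hk : z.1 k = l) :
    (fpfStep j z).bind (fpfStep i) = (fpfStep j z).bind (fpfStep k) := by
  have hj := z.2.apply_eq_comm.1 hi
  have hik' : i ≠ k := Fin.ne_of_val_ne (by omega)
  have hij' : i ≠ j := Fin.ne_of_val_ne (by omega)
  have hlj' : l ≠ j := Fin.ne_of_val_ne (by omega)
  have hlk' : l ≠ k := Fin.ne_of_val_ne (by omega)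
  set y : FPFInvolution n := ⟨swap j k * z.1 * swap j k, z.2.conj j k⟩
  have hyi : y.1 i = k := by simp [y, Equiv.swap_apply_of_ne_of_ne, *]
  have hyj : y.1 j = l := by simp [y, Equiv.swap_apply_of_ne_of_ne, *]
  have hyk := y.2.apply_eq_comm.1 hyi
  have hyl := y.2.apply_eq_comm.1 hyj
  have comm : Commute (swap i j) (swap k l) := by
    rw [Commute, SemiconjBy, ← swapAt_coe hij, ← swapAt_coe hkl]
    exact swapAt_comm (by omega)
  rw [fpfStep_of_lt hjk (by rw [hj, hk, Fin.lt_def]; omega), Option.bind_some, Option.bind_some,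
    fpfStep_of_lt hij (by rw [hyi, hyj, Fin.lt_def]; omega),
    fpfStep_of_lt hkl (by rw [hyk, hyl, Fin.lt_def]; omega)]
  exact congrArg some (Subtype.ext (y.2.conj_eq_conj hyi hyj comm))

theorem fpfStep_theta_fold (hev : n % 2 = 0) {a : ℕ} (ha : Even a) :
    (fpfStep (a + 1) (fpfTheta hev)).bind (fpfStep a) =
      (fpfStep (a + 1) (fpfTheta hev)).bind (fpfStep (a + 2)) := by
  rw [Nat.even_iff] at ha
  rcases le_or_gt n (a + 1 + 1) with hn | hn
  · simp [fpfStep, isBlocked_of_le hn]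
  have paired (i j : Fin n) (hi : (i : ℕ) % 2 = 0) (hij : (j : ℕ) = i + 1) :
      (fpfTheta hev).1 i = j := Fin.ext (by rw [fpfTheta, theta_val, if_pos hi, hij])
  obtain ⟨i, j, hij, rfl⟩ := exists_fin_adjacent (n := n) (a := a) (by omega)
  obtain ⟨k, l, hkl, hk⟩ := exists_fin_adjacent (n := n) (a := i + 2) (by omega)
  rw [← hij, ← hk]
  exact fpfStep_fold hij (by omega) hkl (paired i j ha hij) (paired k l (by omega) hkl)

theorem isThetaVector_fpfTheta (R : Type*) [CommRing R] (hev : n % 2 = 0) :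
    IsThetaVector (actionOp R fpfStep) (Pi.single (fpfTheta hev) 1) where
  apply_even a ha := by
    rw [actionOp, pushforward_single, fpfStep_theta_even hev ha, Option.elim_none]
  fold a ha := by
    simp only [actionOp]
    rw [← LinearMap.comp_apply, ← LinearMap.comp_apply, pushforward_comp, pushforward_comp,
      pushforward_single, pushforward_single, fpfStep_theta_fold hev ha]

theorem heckePoly_demazure_revPerm (n : ℕ) :
    heckePoly n (fun a w ↦ some (demazure a w)) 1 (revPerm n) =
      C (bb ^ invLen (revPerm n)) * grTop n := by
  have hlen : (staircase (varSeq n) 0 0 (n - 1)).length = invLen (revPerm n) := by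
    have h := two_mul_length_staircase (varSeq n) 0 0 (n - 1)
    have h' := two_mul_invLen_revPerm (n := n)
    cases n with
    | zero => simpa using h.trans h'.symm
    | succ n =>
      simp only [Nat.add_sub_cancel] at h h' ⊢
      linarith
  rw [(isGradedHeckeAction_demazure n).heckePoly_top rfl (by rw [invLen_one, zero_add, hlen]),
    hlen, prod_staircase_varSeq]

theorem heckePoly_fpfStep_revPerm (hpos : 0 < n) (hev : n % 2 = 0) :
    heckePoly n fpfStep (fpfTheta hev) ⟨revPerm n, isFPF_revPerm hev⟩ =
      C (bb ^ fpfLen (revPerm n)) * spTop n := by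
  have hs := isGradedHeckeAction_fpfStep hev
  obtain ⟨t, rfl⟩ : ∃ t, n = 2 * t + 2 := ⟨n / 2 - 1, by omega⟩
  have shorten := (isThetaVector_fpfTheta _ hev).factorProd_staircase_apply (β := C bb)
    hs.actionOp (varSeq (2 * t + 2)) Even.zero 0 t
  have hlen : (spStaircase (C bb) (varSeq (2 * t + 2)) 0 0 t).length =
      fpfLen (revPerm (2 * t + 2)) := by
    have h := (isFPF_revPerm hev).two_mul_invLen
    rw [two_mul_invLen_revPerm] at h
    rw [length_spStaircase]
    simp only [Nat.add_succ_sub_one] at h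
    linarith
  rw [hs.heckePoly_top shorten (by simp only [fpfTheta]; rw [fpfLen_theta, zero_add, hlen]), hlen,
    prod_spStaircase_varSeq]

end TopElements

section Main
open Equiv (Perm swap)
variable {n : ℕ}

theorem IsGrothFam.heckePoly_eq {Gr : Perm (Fin n) → MvPolynomial (Fin n) Rb}
    (hGr : IsGrothFam n Gr) (w : Perm (Fin n)) :
    heckePoly n (fun a w ↦ some (demazure a w)) 1 w = C (bb ^ invLen w) * Gr w := by
  refine (isGradedHeckeAction_demazure n).heckePoly_eq (fun i j hij w w' h hne ↦ ?_)
    (hGr.1 ▸ heckePoly_demazure_revPerm n) w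
  obtain rfl := Option.some.inj h
  obtain ⟨i', j', hi, hj, hlt, hw⟩ := demazure_of_ne hne.symm
  obtain rfl : i' = i := Fin.ext hi
  obtain rfl : j' = j := Fin.ext (hj.trans hij.symm)
  have := hGr.2 (w * swap i' j') i' j' hij (by simpa using hlt)
  rwa [mul_assoc, Equiv.swap_mul_self, mul_one, ← hw] at this

theorem IsSpFam.heckePoly_eq {G : Perm (Fin n) → MvPolynomial (Fin n) Rb}
    (hG : IsSpFam n G) (hpos : 0 < n) (hev : n % 2 = 0) (z : FPFInvolution n) :
    heckePoly n fpfStep (fpfTheta hev) z = C (bb ^ fpfLen z.1) * G z.1 := by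
  refine (isGradedHeckeAction_fpfStep hev).heckePoly_eq (F := fun z ↦ G z.1)
    (fun i j hij z z' h hne ↦ ?_) (hG.1 ▸ heckePoly_fpfStep_revPerm hpos hev) z
  obtain ⟨i', j', hi, hj, hlt, hz⟩ := fpfStep_of_ne h hne
  obtain rfl : i' = i := Fin.ext hi
  obtain rfl : j' = j := Fin.ext (hj.trans hij.symm)
  have hi_ne : z.1 i' ≠ j' := z.2.apply_ne_of_lt hij hlt
  have hj_ne : z.1 j' ≠ i' := z.2.apply_eq_comm.not.1 hi_ne
  have z'_left : z'.1 i' = z.1 j' := by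
    simp [hz, Equiv.swap_apply_of_ne_of_ne hj_ne (z.2.2 j')]
  have z'_right : z'.1 j' = z.1 i' := by
    simp [hz, Equiv.swap_apply_of_ne_of_ne (z.2.2 i') hi_ne]
  have conj : swap i' j' * z'.1 * swap i' j' = z.1 := by
    simp [hz, mul_assoc]
  have := hG.2 z'.1 z'.2 i' j' hij (z'_left.trans_ne (z.2.2 j')) (z'_right.trans_ne (z.2.2 i'))
    (by rwa [z'_left, z'_right])
  rwa [conj] at this

end Main

theorem statement2 (n : ℕ) (hpos : 0 < n) (hev : n % 2 = 0)
    (G : Equiv.Perm (Fin n) → MvPolynomial (Fin n) Rb) (hG : IsSpFam n G)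
    (Gr : Equiv.Perm (Fin n) → MvPolynomial (Fin n) Rb) (hGr : IsGrothFam n Gr)
    (z : Equiv.Perm (Fin n)) (hz : IsFPF z) :
    (∀ w ∈ Bfpf n hev z, fpfLen z ≤ invLen w) ∧
      G z = ∑ w ∈ Bfpf n hev z, C (bb ^ (invLen w - fpfLen z)) * Gr w := by
  have length_le : ∀ w ∈ Bfpf n hev z, fpfLen z ≤ invLen w :=
    fun _ hw ↦ fpfLen_le_invLen_of_mem_Bfpf hev (z := ⟨z, hz⟩) hw
  refine ⟨length_le, ?_⟩
  have C_ne_zero : (C (bb ^ fpfLen z) : MvPolynomial (Fin n) Rb) ≠ 0 := by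
    rw [map_pow]
    exact pow_ne_zero _ C_bb_ne_zero
  refine mul_left_cancel₀ C_ne_zero ?_
  calc C (bb ^ fpfLen z) * G z
    _ = heckePoly n fpfStep (fpfTheta hev) ⟨z, hz⟩ := (hG.heckePoly_eq hpos hev ⟨z, hz⟩).symm
    _ = ∑ w ∈ Bfpf n hev z, heckePoly n (fun a w ↦ some (demazure a w)) 1 w :=
      heckePoly_fpfStep_eq_sum hev ⟨z, hz⟩
    _ = C (bb ^ fpfLen z) * ∑ w ∈ Bfpf n hev z, C (bb ^ (invLen w - fpfLen z)) * Gr w := by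
      rw [Finset.mul_sum]
      refine Finset.sum_congr rfl fun w hw ↦ ?_
      rw [hGr.heckePoly_eq, ← mul_assoc, ← C_mul, ← pow_add, Nat.add_sub_cancel' (length_le w hw)]

end
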